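/- arXiv:math/0611893 — 3 statements merged into one kernel-verified Lean document; each statement's English description precedes it below -/
import Mathlib

section
/- For every positive integer k there exists a number φ_k > 0 such that for every set of 2k distinct points t_1, …, t_{2k} ∈ S¹ lying on an arc of length at most φ_k, there exists a raked trigonometric polynomial A(t) = c + Σ_{j=1}^k a_j sin((2j−1)t) + Σ_{j=1}^k b_j cos((2j−1)t) such that for t ∈ S¹ one has A(t) = 0 if and only if t = t_j for some j ∈ {1, …, 2k}. -/
open Real

/-- The symmetric moment curve `SM_{2k} : ℝ → ℝ^{2k}`,
`SM_{2k}(t) = (cos t, sin t, cos 3t, sin 3t, …, cos (2k-1)t, sin (2k-1)t)`. -/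
noncomputable def SM (k : ℕ) (t : ℝ) : EuclideanSpace ℝ (Fin (2 * k)) :=
  WithLp.toLp 2 fun i => if i.1 % 2 = 0 then Real.cos ((2 * (i.1 / 2) + 1) * t)
           else Real.sin ((2 * (i.1 / 2) + 1) * t)

/-- `B_{2k}`, the convex hull of the symmetric moment curve. -/
noncomputable def B (k : ℕ) : Set (EuclideanSpace ℝ (Fin (2 * k))) :=
  convexHull ℝ (Set.range (SM k))

/-- The length of the shorter arc between the points of `S¹ = ℝ/2πℤ`
represented by `s` and `t`. -/
noncomputable def arcDist (s t : ℝ) : ℝ :=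
  dist (s : AddCircle (2 * π)) (t : AddCircle (2 * π))

/-- The raked trigonometric polynomial of degree `2k-1` with constant term `c`
and coefficients `a j`, `b j` on `sin (2j-1)t`, `cos (2j-1)t`. -/
noncomputable def rakedTrig (k : ℕ) (c : ℝ) (a b : Fin k → ℝ) (t : ℝ) : ℝ :=
  c + (∑ j : Fin k, a j * Real.sin ((2 * (j : ℕ) + 1) * t))
    + (∑ j : Fin k, b j * Real.cos ((2 * (j : ℕ) + 1) * t))

/-- The derivative of the raked trigonometric polynomial. -/
noncomputable def rakedD (k : ℕ) (a b : Fin k → ℝ) (t : ℝ) : ℝ :=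
  ∑ j : Fin k, (2 * (j : ℕ) + 1) * (a j * Real.cos ((2 * (j : ℕ) + 1) * t)
    - b j * Real.sin ((2 * (j : ℕ) + 1) * t))

lemma raked_hasDeriv (k : ℕ) (c : ℝ) (a b : Fin k → ℝ) (t : ℝ) :
    HasDerivAt (rakedTrig k c a b) (rakedD k a b t) t := by
  have h1 : HasDerivAt (fun t : ℝ => ∑ j : Fin k, a j * Real.sin ((2 * (j : ℕ) + 1) * t))
      (∑ j : Fin k, a j * (Real.cos ((2 * (j : ℕ) + 1) * t) * (2 * (j : ℕ) + 1))) t := by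
    apply HasDerivAt.fun_sum
    intro j _
    have := ((hasDerivAt_id t).const_mul (2 * ((j : ℕ) : ℝ) + 1)).sin.const_mul (a j)
    simpa using this
  have h2 : HasDerivAt (fun t : ℝ => ∑ j : Fin k, b j * Real.cos ((2 * (j : ℕ) + 1) * t))
      (∑ j : Fin k, b j * (-Real.sin ((2 * (j : ℕ) + 1) * t) * (2 * (j : ℕ) + 1))) t := by
    apply HasDerivAt.fun_sum
    intro j _
    have := ((hasDerivAt_id t).const_mul (2 * ((j : ℕ) : ℝ) + 1)).cos.const_mul (b j)
    simpa using this
  have h3 := ((hasDerivAt_const t c).add h1).add h2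
  have e : rakedD k a b t = 0 + (∑ j : Fin k, a j * (Real.cos ((2 * (j : ℕ) + 1) * t) * (2 * (j : ℕ) + 1)))
     + (∑ j : Fin k, b j * (-Real.sin ((2 * (j : ℕ) + 1) * t) * (2 * (j : ℕ) + 1))) := by
    rw [zero_add, ← Finset.sum_add_distrib]
    unfold rakedD
    apply Finset.sum_congr rfl
    intro j _
    ring
  rw [e]
  exact h3

/-- Complex coefficient. -/
noncomputable def rakedCoef {k : ℕ} (a b : Fin k → ℝ) (j : Fin k) : ℂ :=
  (2 * (j : ℕ) + 1) * ((a j : ℂ) + (b j : ℂ) * Complex.I) / 2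

noncomputable def rakedCoef' {k : ℕ} (a b : Fin k → ℝ) (j : Fin k) : ℂ :=
  (2 * (j : ℕ) + 1) * ((a j : ℂ) - (b j : ℂ) * Complex.I) / 2

/-- The algebraic polynomial associated with the derivative. -/
noncomputable def rakedQ (k : ℕ) (a b : Fin k → ℝ) : Polynomial ℂ :=
  ∑ j : Fin k, (Polynomial.C (rakedCoef a b j) * Polynomial.X ^ (k + (j : ℕ))
    + Polynomial.C (rakedCoef' a b j) * Polynomial.X ^ (k - 1 - (j : ℕ)))

lemma rakedQ_natDegree (k : ℕ) (a b : Fin k → ℝ) : (rakedQ k a b).natDegree ≤ 2 * k - 1 := by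
  unfold rakedQ
  apply Polynomial.natDegree_sum_le_of_forall_le
  intro j _
  have := j.2
  apply Polynomial.natDegree_add_le_of_degree_le
  · exact (Polynomial.natDegree_C_mul_X_pow_le _ _).trans (by omega)
  · exact (Polynomial.natDegree_C_mul_X_pow_le _ _).trans (by omega)

lemma rakedQ_zero {k : ℕ} {a b : Fin k → ℝ} (h : rakedQ k a b = 0) : a = 0 ∧ b = 0 := by
  have key : ∀ j, a j = 0 ∧ b j = 0 := by
    intro j
    have h1 : (rakedQ k a b).coeff (k + j) = rakedCoef a b j := by
      unfold rakedQ
      rw [Polynomial.finsetSum_coeff, Finset.sum_eq_single j]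
      · have := j.2
        simp only [Polynomial.coeff_add, Polynomial.coeff_C_mul, Polynomial.coeff_X_pow]
        rw [if_neg (show ¬ (k + (j : ℕ) = k - 1 - (j : ℕ)) by omega)]
        simp
      · intro i _ hij
        have := j.2
        have := i.2
        have h3 : (i : ℕ) ≠ j := fun h => hij (Fin.ext h)
        simp only [Polynomial.coeff_add, Polynomial.coeff_C_mul, Polynomial.coeff_X_pow]
        rw [if_neg (by omega), if_neg (by omega)]
        simp
      · simp
    rw [h, Polynomial.coeff_zero] at h1
    unfold rakedCoef at h1
    have h2 : (2 * ((j : ℕ) : ℂ) + 1) ≠ 0 := by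
      norm_cast
    have h4 : (a j : ℂ) + (b j : ℂ) * Complex.I = 0 := by
      have h5 := h1.symm
      rw [div_eq_zero_iff, mul_eq_zero] at h5
      rcases h5 with (h5 | h5) | h5
      · exact absurd h5 h2
      · exact h5
      · norm_num at h5
    constructor
    · simpa using congrArg Complex.re h4
    · simpa using congrArg Complex.im h4
  exact ⟨funext fun j => (key j).1, funext fun j => (key j).2⟩

lemma rakedQ_eval (k : ℕ) (a b : Fin k → ℝ) (t : ℝ) :
    (rakedQ k a b).eval (Complex.exp (2 * t * Complex.I)) =
      Complex.exp (t * Complex.I) ^ (2 * k - 1) * (rakedD k a b t : ℂ) := by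
  unfold rakedQ rakedD
  rw [Polynomial.eval_finsetSum]
  push_cast
  rw [Finset.mul_sum]
  apply Finset.sum_congr rfl
  intro j _
  simp only [Polynomial.eval_add, Polynomial.eval_mul, Polynomial.eval_C, Polynomial.eval_pow,
    Polynomial.eval_X]
  have hj := j.2
  obtain ⟨m, hm⟩ : ∃ m, k = j + 1 + m := ⟨k - (j + 1), by omega⟩
  have e0 : Complex.exp (2 * t * Complex.I) = Complex.exp (t * Complex.I) ^ 2 := by
    rw [← Complex.exp_nat_mul]; congr 1; push_cast; ring
  have e1 : Complex.exp ((2 * ((j : ℕ) : ℂ) + 1) * t * Complex.I)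
      = Complex.exp (t * Complex.I) ^ (2 * (j : ℕ) + 1) := by
    rw [← Complex.exp_nat_mul]; congr 1; push_cast; ring
  have e2 : Complex.exp (-((2 * ((j : ℕ) : ℂ) + 1) * t) * Complex.I)
      = (Complex.exp (t * Complex.I) ^ (2 * (j : ℕ) + 1))⁻¹ := by
    rw [← e1, ← Complex.exp_neg]; congr 1; ring
  have hz : Complex.exp (t * Complex.I) ≠ 0 := Complex.exp_ne_zero _
  rw [Complex.cos, Complex.sin, e0, e1, e2]
  generalize Complex.exp (t * Complex.I) = z at *
  unfold rakedCoef rakedCoef'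
  have x1 : 2 * k - 1 = (2 * (j : ℕ) + 1) + 2 * m := by omega
  have x2 : k + (j : ℕ) = 2 * (j : ℕ) + 1 + m := by omega
  have x3 : k - 1 - (j : ℕ) = m := by omega
  rw [x1, x2, x3, ← pow_mul, ← pow_mul, pow_add z (2 * (j : ℕ) + 1) (2 * m), 
    show 2 * (2 * (j : ℕ) + 1 + m) = (2 * (j : ℕ) + 1) + (2 * (j : ℕ) + 1) + 2 * m by ring,
    pow_add, pow_add]
  have hz' : z ^ (2 * (j : ℕ) + 1) ≠ 0 := pow_ne_zero _ hz
  generalize z ^ (2 * (j : ℕ) + 1) = y at *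
  generalize z ^ (2 * m) = x at *
  field_simp
  ring_nf

lemma exp_sub_exp (t τ : ℝ) : Complex.exp (2 * t * Complex.I) - Complex.exp (2 * τ * Complex.I)
    = Complex.exp (t * Complex.I) * (Complex.exp (τ * Complex.I) * (2 * Complex.I)) *
      (Real.sin (t - τ) : ℂ) := by
  have e0 : ∀ t : ℝ, Complex.exp (2 * t * Complex.I) = Complex.exp (t * Complex.I) ^ 2 := by
    intro t
    rw [← Complex.exp_nat_mul]; congr 1; push_cast; ring
  rw [e0, e0]
  push_cast
  rw [Complex.sin]
  have e1 : Complex.exp ((t - τ : ℂ) * Complex.I) =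
      Complex.exp (t * Complex.I) * (Complex.exp (τ * Complex.I))⁻¹ := by
    rw [← Complex.exp_neg, ← Complex.exp_add]; congr 1; ring
  have e2 : Complex.exp (-(t - τ : ℂ) * Complex.I) =
      Complex.exp (τ * Complex.I) * (Complex.exp (t * Complex.I))⁻¹ := by
    rw [← Complex.exp_neg, ← Complex.exp_add]; congr 1; ring
  rw [e1, e2]
  have h1 : Complex.exp (t * Complex.I) ≠ 0 := Complex.exp_ne_zero _
  have h2 : Complex.exp (τ * Complex.I) ≠ 0 := Complex.exp_ne_zero _
  generalize Complex.exp (t * Complex.I) = z at *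
  generalize Complex.exp (τ * Complex.I) = w at *
  field_simp
  simp only [Complex.I_sq]
  ring

lemma exp_inj {x s t : ℝ} (hs : s ∈ Set.Ioo x (x + π)) (ht : t ∈ Set.Ioo x (x + π))
    (h : Complex.exp (2 * s * Complex.I) = Complex.exp (2 * t * Complex.I)) : s = t := by
  have h1 := exp_sub_exp s t
  rw [h, sub_self] at h1
  have h2 : Real.sin (s - t) = 0 := by
    have := h1.symm
    simpa [Complex.exp_ne_zero, Complex.I_ne_zero, -Complex.ofReal_sin, -Complex.ofReal_sub] using this
  have h3 := (Real.sin_eq_zero_iff_of_lt_of_lt (by linarith [hs.1, ht.2]) (by linarith [hs.2, ht.1])).1 h2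
  linarith

lemma rakedQ_root {k : ℕ} {a b : Fin k → ℝ} {t : ℝ} (h : rakedD k a b t = 0) :
    (rakedQ k a b).eval (Complex.exp (2 * t * Complex.I)) = 0 := by
  rw [rakedQ_eval, h]; simp

lemma prod_dvd_Q {k m : ℕ} {a b : Fin k → ℝ} {x : ℝ} {τ : Fin m → ℝ}
    (hτ : ∀ i, τ i ∈ Set.Ioo x (x + π)) (hinj : Function.Injective τ)
    (h0 : ∀ i, rakedD k a b (τ i) = 0) :
    (∏ i, (Polynomial.X - Polynomial.C (Complex.exp (2 * τ i * Complex.I)))) ∣ rakedQ k a b := by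
  apply Finset.prod_dvd_of_coprime
  · intro i _ j _ hij
    apply Polynomial.pairwise_coprime_X_sub_C
      (s := fun i => Complex.exp (2 * τ i * Complex.I)) _ hij
    intro i j h
    exact hinj (exp_inj (hτ i) (hτ j) h)
  · intro i _
    exact Polynomial.dvd_iff_isRoot.2 (rakedQ_root (h0 i))

lemma too_many {k : ℕ} (hk : 0 < k) {a b : Fin k → ℝ} {x : ℝ} {τ : Fin (2 * k) → ℝ}
    (hτ : ∀ i, τ i ∈ Set.Ioo x (x + π)) (hinj : Function.Injective τ)
    (h0 : ∀ i, rakedD k a b (τ i) = 0) : a = 0 ∧ b = 0 := by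
  apply rakedQ_zero
  by_contra hne
  have h1 := Polynomial.natDegree_le_of_dvd (prod_dvd_Q hτ hinj h0) hne
  rw [Polynomial.natDegree_finsetProd_X_sub_C_eq_card] at h1
  have h2 := rakedQ_natDegree k a b
  simp at h1
  omega

lemma prod_form {k n : ℕ} (hn : n = 2 * k - 1) {a b : Fin k → ℝ} {x : ℝ} {τ : Fin n → ℝ}
    (hτ : ∀ i, τ i ∈ Set.Ioo x (x + π)) (hinj : Function.Injective τ)
    (h0 : ∀ i, rakedD k a b (τ i) = 0) :
    ∃ C : ℝ, ∀ t, rakedD k a b t = C * ∏ i, Real.sin (t - τ i) := by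
  obtain ⟨R, hR⟩ := prod_dvd_Q hτ hinj h0
  have hRd : R.natDegree = 0 := by
    by_cases hR0 : R = 0
    · simp [hR0]
    have h2 := rakedQ_natDegree k a b
    rw [hR, Polynomial.natDegree_mul _ hR0,
      Polynomial.natDegree_finsetProd_X_sub_C_eq_card] at h2
    · simp at h2
      omega
    · exact (Polynomial.monic_prod_X_sub_C _ _).ne_zero
  obtain ⟨r, rfl⟩ := Polynomial.natDegree_eq_zero.1 hRd
  set D : ℂ := r * ∏ i, (Complex.exp (τ i * Complex.I) * (2 * Complex.I)) with hD
  have key : ∀ t : ℝ, (rakedD k a b t : ℂ) = D * ((∏ i, Real.sin (t - τ i) : ℝ) : ℂ) := by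
    intro t
    have h := rakedQ_eval k a b t
    rw [hR, Polynomial.eval_mul, Polynomial.eval_prod, Polynomial.eval_C] at h
    simp only [Polynomial.eval_sub, Polynomial.eval_X, Polynomial.eval_C] at h
    rw [Finset.prod_congr rfl (fun i _ => exp_sub_exp t (τ i)), Finset.prod_mul_distrib,
      Finset.prod_mul_distrib, Finset.prod_const, Finset.card_univ, Fintype.card_fin, ← hn] at h
    have hz : Complex.exp (t * Complex.I) ^ n ≠ 0 := pow_ne_zero _ (Complex.exp_ne_zero _)
    apply mul_left_cancel₀ hz
    rw [← h, hD, Complex.ofReal_prod]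
    ring
  refine ⟨D.re, fun t => ?_⟩
  have := congrArg Complex.re (key t)
  rwa [Complex.ofReal_re, Complex.re_mul_ofReal] at this

lemma rolle_family {n : ℕ} {f f' : ℝ → ℝ} (hf : ∀ x, HasDerivAt f (f' x) x) {x y : ℝ}
    {t : Fin (n + 1) → ℝ} (ht : ∀ i, t i ∈ Set.Icc x y) (hinj : Function.Injective t)
    (h0 : ∀ i, f (t i) = 0) :
    ∃ τ : Fin n → ℝ, (∀ i, τ i ∈ Set.Ioo x y) ∧ Function.Injective τ ∧ (∀ i, f' (τ i) = 0) ∧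
      ∃ j, ∀ i, τ i < t j := by
  set u := t ∘ Tuple.sort t with hu
  have hmono : StrictMono u :=
    (Tuple.monotone_sort t).strictMono_of_injective (hinj.comp (Tuple.sort t).injective)
  have hr : ∀ i : Fin n, ∃ z ∈ Set.Ioo (u i.castSucc) (u i.succ), f' z = 0 := by
    intro i
    apply exists_hasDerivAt_eq_zero (f := f) (hmono (Fin.castSucc_lt_succ))
    · exact fun z _ => (hf z).continuousAt.continuousWithinAt
    · simp [hu, h0]
    · exact fun z _ => hf z
  choose τ hτ hτ0 using hr
  refine ⟨τ, fun i => ⟨?_, ?_⟩, ?_, hτ0, Tuple.sort t (Fin.last n), fun i => ?_⟩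
  · exact lt_of_le_of_lt (ht _).1 (hτ i).1
  · exact lt_of_lt_of_le (hτ i).2 (ht _).2
  · apply StrictMono.injective
    intro i j hij
    have : u i.succ ≤ u j.castSucc := hmono.monotone (by
      rw [Fin.le_def]; simpa using hij)
    linarith [(hτ i).2, (hτ j).1]
  · have : u i.succ ≤ u (Fin.last n) := hmono.monotone (Fin.le_last _)
    exact lt_of_lt_of_le (hτ i).2 this

lemma raked_periodic (k : ℕ) (c : ℝ) (a b : Fin k → ℝ) :
    Function.Periodic (rakedTrig k c a b) (2 * π) := by
  intro t
  unfold rakedTrig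
  congr 1
  · congr 1
    apply Finset.sum_congr rfl
    intro j _
    have : (2 * ((j : ℕ) : ℝ) + 1) * (t + 2 * π) = (2 * (j : ℕ) + 1) * t + ((2 * (j : ℕ) + 1 : ℕ) : ℝ) * (2 * π) := by
      push_cast; ring
    rw [this, Real.sin_add_nat_mul_two_pi]
  · apply Finset.sum_congr rfl
    intro j _
    have : (2 * ((j : ℕ) : ℝ) + 1) * (t + 2 * π) = (2 * (j : ℕ) + 1) * t + ((2 * (j : ℕ) + 1 : ℕ) : ℝ) * (2 * π) := by
      push_cast; ring
    rw [this, Real.cos_add_nat_mul_two_pi]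

lemma raked_of_coe_eq {k : ℕ} {c : ℝ} {a b : Fin k → ℝ} {s t : ℝ}
    (h : (s : AddCircle (2 * π)) = (t : AddCircle (2 * π))) :
    rakedTrig k c a b s = rakedTrig k c a b t := by
  have h1 := (raked_periodic k c a b).lift_coe s
  rw [h, (raked_periodic k c a b).lift_coe] at h1
  exact h1.symm

lemma raked_exists (k : ℕ) (t : Fin (2 * k) → ℝ) :
    ∃ (c : ℝ) (a b : Fin k → ℝ), ¬ (c = 0 ∧ a = 0 ∧ b = 0) ∧ ∀ i, rakedTrig k c a b (t i) = 0 := by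
  let L : (ℝ × (Fin k → ℝ) × (Fin k → ℝ)) →ₗ[ℝ] (Fin (2 * k) → ℝ) :=
    { toFun := fun p i => rakedTrig k p.1 p.2.1 p.2.2 (t i)
      map_add' := by
        intro p q
        funext i
        simp only [rakedTrig, Prod.fst_add, Prod.snd_add, Pi.add_apply, add_mul,
          Finset.sum_add_distrib]
        ring
      map_smul' := by
        intro r p
        funext i
        simp only [rakedTrig, Prod.smul_fst, Prod.smul_snd, Pi.smul_apply, smul_eq_mul, mul_assoc,
          ← Finset.mul_sum, RingHom.id_apply]
        ring }
  have hL : LinearMap.ker L ≠ ⊥ := by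
    apply LinearMap.ker_ne_bot_of_finrank_lt
    simp
    omega
  obtain ⟨p, hp, hp0⟩ := Submodule.exists_mem_ne_zero_of_ne_bot hL
  refine ⟨p.1, p.2.1, p.2.2, ?_, fun i => congrFun hp i⟩
  rintro ⟨h1, h2, h3⟩
  exact hp0 (Prod.ext h1 (Prod.ext h2 h3))

/-- Positivity in the far window. -/
lemma far_pos {n : ℕ} {F g : ℝ → ℝ} {c φ T s : ℝ} {τ : Fin n → ℝ}
    (hφ : φ = Real.sin (1 / 2) ^ n / 4)
    (hF : ∀ x, HasDerivAt F (g x) x) (hg : ∀ x, g x = ∏ i, Real.sin (x - τ i))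
    (hτ : ∀ i, τ i ∈ Set.Ioo c (c + φ)) (hT : T ∈ Set.Icc c (c + φ)) (hτT : ∀ i, τ i < T)
    (hFT : F T = 0) (hs : s ∈ Set.Icc (c + π) (c + π + φ)) : 0 < F s := by
  have hpi := Real.pi_gt_three
  have hs0 : 0 < Real.sin (1 / 2) := Real.sin_pos_of_pos_of_lt_pi (by norm_num) (by linarith)
  have hφ0 : 0 < φ := by rw [hφ]; positivity
  have hφ1 : φ ≤ 1 / 4 := by
    rw [hφ]
    have := pow_le_one₀ hs0.le (Real.sin_le_one (1 / 2)) (n := n)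
    linarith
  have hd : ∀ x, deriv F x = g x := fun x => (hF x).deriv
  have hdiff : Differentiable ℝ F := fun x => (hF x).differentiableAt
  have hmono : MonotoneOn F (Set.Icc T (c + π)) := by
    apply monotoneOn_of_deriv_nonneg (convex_Icc _ _) hdiff.continuous.continuousOn
      hdiff.differentiableOn
    intro x hx
    rw [interior_Icc] at hx
    rw [hd, hg]
    apply Finset.prod_nonneg
    intro i _
    apply Real.sin_nonneg_of_nonneg_of_le_pi
    · linarith [hx.1, hτT i]
    · linarith [hx.2, (hτ i).1]
  have hT1 := hT.1
  have hT2 := hT.2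
  have h1 : 0 ≤ F (c + 1) := by
    rw [← hFT]
    exact hmono ⟨le_refl _, by linarith⟩ ⟨by linarith, by linarith⟩ (by linarith)
  have h2 : Real.sin (1 / 2) ^ n * ((c + 3 / 2) - (c + 1)) ≤ F (c + 3 / 2) - F (c + 1) := by
    apply (convex_Icc (c + 1) (c + 3 / 2)).mul_sub_le_image_sub_of_le_deriv
      hdiff.continuous.continuousOn hdiff.differentiableOn
    · intro x hx
      rw [interior_Icc] at hx
      rw [hd, hg]
      have : Real.sin (1 / 2) ^ n = ∏ i : Fin n, Real.sin (1 / 2) := by simp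
      rw [this]
      apply Finset.prod_le_prod
      · intro i _; exact hs0.le
      · intro i _
        have hi := hτ i
        apply Real.sin_le_sin_of_le_of_le_pi_div_two
        · linarith
        · linarith [hi.1, hx.2]
        · linarith [hi.2, hx.1]
    · constructor <;> linarith
    · constructor <;> linarith
    · linarith
  have h3 : F (c + 3 / 2) ≤ F (c + π) :=
    hmono ⟨by linarith, by linarith⟩ ⟨by linarith, by linarith⟩ (by linarith)
  have h4 : (-1) * (s - (c + π)) ≤ F s - F (c + π) := by
    apply (convex_Icc (c + π) (c + π + φ)).mul_sub_le_image_sub_of_le_deriv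
      hdiff.continuous.continuousOn hdiff.differentiableOn
    · intro x hx
      rw [hd, hg]
      have : |∏ i, Real.sin (x - τ i)| ≤ 1 := by
        rw [Finset.abs_prod]
        apply Finset.prod_le_one
        · intro i _; exact abs_nonneg _
        · intro i _; exact Real.abs_sin_le_one _
      exact (abs_le.1 this).1
    · constructor <;> linarith
    · exact hs
    · exact hs.1
  have h5 : Real.sin (1 / 2) ^ n = 4 * φ := by rw [hφ]; ring
  rw [h5] at h2
  linarith [hs.2]

/-- Proposition 6.1: there is `φ_k > 0` such that for any `2k` distinct points of `S¹`
lying on an arc of length at most `φ_k` there is a raked trigonometric polynomial whose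
zero set on `S¹` is exactly this set of points. -/
theorem stmt_16 (k : ℕ) (hk : 0 < k) :
    ∃ φ : ℝ, 0 < φ ∧
      ∀ (c : ℝ) (t : Fin (2 * k) → ℝ),
        (∀ i, t i ∈ Set.Icc c (c + φ)) →
        (Function.Injective fun i => ((t i : ℝ) : AddCircle (2 * π))) →
        ∃ (c₀ : ℝ) (a b : Fin k → ℝ),
          ∀ s : ℝ, rakedTrig k c₀ a b s = 0 ↔
            ∃ i, ((s : AddCircle (2 * π)) = ((t i : ℝ) : AddCircle (2 * π))) := by
  obtain ⟨n, hn⟩ : ∃ n, n = 2 * k - 1 := ⟨_, rfl⟩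
  have hkn : 2 * k = n + 1 := by omega
  have hpi := Real.pi_gt_three
  have hs0 : 0 < Real.sin (1 / 2) := Real.sin_pos_of_pos_of_lt_pi (by norm_num) (by linarith)
  obtain ⟨φ, hφ⟩ : ∃ φ, φ = Real.sin (1 / 2) ^ n / 4 := ⟨_, rfl⟩
  have hφ0 : 0 < φ := by rw [hφ]; positivity
  have hφ1 : φ ≤ 1 / 4 := by
    rw [hφ]
    have := pow_le_one₀ hs0.le (Real.sin_le_one (1 / 2)) (n := n)
    linarith
  refine ⟨φ, hφ0, ?_⟩
  intro c t ht hinj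
  have htinj : Function.Injective t := fun i j h => hinj (by simp [h])
  obtain ⟨c₀, a, b, hne, hz⟩ := raked_exists k t
  have hab : ¬ (a = 0 ∧ b = 0) := by
    rintro ⟨rfl, rfl⟩
    have h := hz ⟨0, by omega⟩
    simp [rakedTrig] at h
    exact hne ⟨h, rfl, rfl⟩
  refine ⟨c₀, a, b, fun s => ⟨fun hs => ?_, fun ⟨i, hi⟩ => (raked_of_coe_eq hi).trans (hz i)⟩⟩
  by_contra hno
  push Not at hno
  -- reduce to the fundamental window
  have h2pi : (0 : ℝ) < 2 * π := by positivity
  obtain ⟨s', hs'mem, hs'eq⟩ : ∃ s' ∈ Set.Ico (c + φ - π) (c + φ - π + 2 * π),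
      (s' : AddCircle (2 * π)) = s :=
    ⟨toIcoMod h2pi (c + φ - π) s, toIcoMod_mem_Ico _ _ _, by
      have h := toIcoMod_add_toIcoDiv_zsmul h2pi (c + φ - π) s
      conv_rhs => rw [← h]
      rw [AddCircle.coe_add, AddCircle.coe_zsmul, AddCircle.coe_period, smul_zero, add_zero]⟩
  rw [raked_of_coe_eq hs'eq.symm] at hs
  have hs't : ∀ i, s' ≠ t i := by
    intro i h
    exact hno i (by rw [← hs'eq, h])
  have hD := raked_hasDeriv k c₀ a b
  -- the near window
  have near : ∀ x, s' ∈ Set.Icc x (x + π) → (∀ i, t i ∈ Set.Icc x (x + π)) → False := by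
    intro x hx htx
    obtain ⟨τ, h1, h2, h3, -⟩ := rolle_family hD (x := x) (y := x + π)
      (t := Fin.cons s' t) (fun i => by
        refine Fin.cases ?_ (fun j => ?_) i
        · simpa using hx
        · simpa using htx j)
      (by
        rw [Fin.cons_injective_iff]
        refine ⟨?_, htinj⟩
        rintro ⟨i, hi⟩
        exact hs't i hi.symm)
      (fun i => by
        refine Fin.cases ?_ (fun j => ?_) i
        · simpa using hs
        · simpa using hz j)
    exact hab (too_many hk h1 h2 h3)
  rcases le_or_gt s' c with h1 | h1
  · refine near (c + φ - π) ⟨hs'mem.1, by linarith⟩ fun i => ⟨?_, ?_⟩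
    · linarith [(ht i).1]
    · linarith [(ht i).2]
  rcases le_or_gt s' (c + π) with h2 | h2
  · refine near c ⟨h1.le, h2⟩ fun i => ⟨(ht i).1, ?_⟩
    linarith [(ht i).2]
  -- the far window
  obtain ⟨τ, hτ, hτinj, hτ0, j, hj⟩ := rolle_family (n := n) hD (x := c) (y := c + φ)
    (t := fun i => t (Fin.cast hkn.symm i)) (fun i => ht _)
    (htinj.comp (Fin.cast_injective _)) (fun i => hz _)
  obtain ⟨C, hC⟩ := prod_form hn (x := c)
    (fun i => ⟨(hτ i).1, by linarith [(hτ i).2]⟩) hτinj hτ0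
  have hC0 : C ≠ 0 := by
    rintro rfl
    apply hab
    apply too_many hk (x := 0) (τ := fun i => ((i : ℕ) + 1 : ℝ) / (2 * k + 1))
    · intro i
      have hi : ((i : ℕ) : ℝ) + 1 ≤ 2 * k := by exact_mod_cast i.2
      have hk0 : (0 : ℝ) < 2 * k + 1 := by positivity
      refine ⟨by positivity, ?_⟩
      rw [div_lt_iff₀ hk0]
      nlinarith
    · intro i j h
      have hk0 : (2 * k + 1 : ℝ) ≠ 0 := by positivity
      have h' := (div_left_inj' hk0).1 h
      apply Fin.ext
      exact_mod_cast add_right_cancel h'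
    · intro i
      rw [hC]; simp
  have hpos := far_pos (F := fun x => C⁻¹ * rakedTrig k c₀ a b x)
    (g := fun x => C⁻¹ * rakedD k a b x) hφ (fun x => (hD x).const_mul _)
    (fun x => by simp only [hC]; field_simp) hτ (ht _) hj (by simp [hz])
    (s := s') ⟨h2.le, by linarith [hs'mem.2]⟩
  simp [hs] at hpos
end

section
/- Fix a positive even integer d = 2k and an integer j with k ≤ j < 2k. Then there exist constants γ_j(d) > 0 and Γ_j(d) > 0 and an integer N such that for every even n ≥ N, γ_j(d)·n^k ≤ fmax(d,n;j) ≤ Γ_j(d)·n^k. Equivalently, γ_j(d) + o(1) ≤ fmax(d,n;j)/C(n,k) ≤ Γ_j(d) + o(1) as n → ∞. -/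
open Real

/-- A centrally symmetric polytope in `ℝ^d`: the convex hull of a finite set,
satisfying `P = -P`. -/
def IsCSPolytope {d : ℕ} (P : Set (EuclideanSpace ℝ (Fin d))) : Prop :=
  (∃ V : Finset (EuclideanSpace ℝ (Fin d)), P = convexHull ℝ (V : Set (EuclideanSpace ℝ (Fin d)))) ∧
  P = -P

/-- The number of `j`-dimensional faces of `P`, a face being the intersection of `P`
with a supporting hyperplane, i.e. a nonempty exposed face. -/
noncomputable def faceCount {d : ℕ} (P : Set (EuclideanSpace ℝ (Fin d))) (j : ℕ) : ℕ :=
  Set.ncard {F : Set (EuclideanSpace ℝ (Fin d)) |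
    IsExposed ℝ P F ∧ F.Nonempty ∧ Module.finrank ℝ (vectorSpan ℝ F) = j}

/-- `fmax d n j`: the maximum number of `j`-faces of a `d`-dimensional centrally
symmetric polytope in `ℝ^d` with exactly `n` vertices. -/
noncomputable def fmax (d n j : ℕ) : ℕ :=
  sSup {m : ℕ | ∃ P : Set (EuclideanSpace ℝ (Fin d)),
    IsCSPolytope P ∧ affineSpan ℝ P = ⊤ ∧
    (Set.extremePoints ℝ P).ncard = n ∧ faceCount P j = m}


section Upper

open Classical in
theorem aux_ext {W ι : Type*} [AddCommGroup W] [Module ℝ W] [Fintype ι]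
    (f : ι → W) (ω : ι → ℝ) (F : Finset ι) (lam : Module.Dual ℝ W)
    (h0 : ∀ i ∈ F, lam (f i) = 0) (h1 : ∀ i, i ∉ F → lam (f i) < 0) :
    ∀ (N : ℕ) (l : Module.Dual ℝ W), (∀ i, l (f i) ≤ ω i) →
      (F.filter (fun i => l (f i) ≠ ω i)).card = N →
      ∃ l' : Module.Dual ℝ W, (∀ i, l' (f i) ≤ ω i) ∧
        (∀ i ∈ F, l (f i) = ω i → l' (f i) = ω i) ∧
        (∀ i ∈ F, f i ∈ Submodule.span ℝ (f '' {i | i ∈ F ∧ l' (f i) = ω i})) := by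
  intro N
  induction N using Nat.strong_induction_on with
  | _ N ih =>
  intro l hl hN
  by_cases hdone : ∀ i ∈ F, f i ∈ Submodule.span ℝ (f '' {i | i ∈ F ∧ l (f i) = ω i})
  · exact ⟨l, hl, fun i _ h => h, hdone⟩
  push Not at hdone
  obtain ⟨i0, hi0, hn⟩ := hdone
  obtain ⟨mu, hmu0, hmu⟩ : ∃ mu : Module.Dual ℝ W, 0 < mu (f i0) ∧
      ∀ i ∈ F, l (f i) = ω i → mu (f i) = 0 := by
    obtain ⟨g, hg, hg'⟩ := Submodule.exists_dual_map_eq_bot_of_notMem hn inferInstance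
    have hz : ∀ i ∈ F, l (f i) = ω i → g (f i) = 0 := by
      intro i hi hh
      have : g (f i) ∈ Submodule.map g (Submodule.span ℝ (f '' {i | i ∈ F ∧ l (f i) = ω i})) :=
        Submodule.mem_map_of_mem (Submodule.subset_span ⟨i, ⟨hi, hh⟩, rfl⟩)
      rw [hg'] at this
      simpa using this
    rcases lt_or_gt_of_ne hg with h | h
    · exact ⟨-g, by simpa using h, fun i hi hh => by simp [hz i hi hh]⟩
    · exact ⟨g, h, hz⟩
  obtain ⟨i1, hi1, hmin⟩ := Finset.exists_min_image (F.filter (fun i => 0 < mu (f i)))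
    (fun i => (ω i - l (f i)) / mu (f i)) ⟨i0, by simp [hi0, hmu0]⟩
  simp only [Finset.mem_filter] at hi1 hmin
  set t := (ω i1 - l (f i1)) / mu (f i1) with ht
  have ht0 : 0 ≤ t := div_nonneg (by linarith [hl i1]) hi1.2.le
  obtain ⟨M, hM⟩ := (Set.finite_range (fun i => ((l + t • mu) (f i) - ω i) / (-lam (f i)))).bddAbove
  have hM' : ∀ i, ((l + t • mu) (f i) - ω i) / (-lam (f i)) ≤ M := fun i => hM ⟨i, rfl⟩
  set l2 := l + t • mu + M • lam with hl2
  have hF : ∀ i ∈ F, l2 (f i) = l (f i) + t * mu (f i) := by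
    intro i hi; simp [hl2, h0 i hi]
  have hfeas : ∀ i, l2 (f i) ≤ ω i := by
    intro i
    by_cases hi : i ∈ F
    · rw [hF i hi]
      by_cases hp : 0 < mu (f i)
      · have := hmin i ⟨hi, hp⟩
        rw [le_div_iff₀ hp] at this
        linarith
      · have := mul_nonneg ht0 (by linarith : 0 ≤ - mu (f i))
        linarith [hl i]
    · have := hM' i
      rw [div_le_iff₀ (by linarith [h1 i hi])] at this
      simp [hl2] at this ⊢
      linarith
  have hold : ∀ i ∈ F, l (f i) = ω i → l2 (f i) = ω i := by
    intro i hi hh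
    rw [hF i hi, hmu i hi hh, hh]; simp
  have hnew : l2 (f i1) = ω i1 := by
    rw [hF i1 hi1.1, ht, div_mul_cancel₀ _ hi1.2.ne']; ring
  obtain ⟨l', a, b, c⟩ := ih _ (by
    rw [← hN]
    apply Finset.card_lt_card
    refine ⟨?_, ?_⟩
    · intro i hi
      simp only [Finset.mem_filter] at hi ⊢
      exact ⟨hi.1, fun h => hi.2 (hold i hi.1 h)⟩
    · intro hsub
      have : i1 ∈ F.filter (fun i => l (f i) ≠ ω i) := by
        simp only [Finset.mem_filter]
        refine ⟨hi1.1, fun h => ?_⟩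
        have := hmu i1 hi1.1 h
        linarith [hi1.2]
      have := hsub this
      simp [hnew] at this) l2 hfeas rfl
  exact ⟨l', a, fun i hi h => b i hi (hold i hi h), c⟩

theorem aux_generic_u {W ι : Type*} [AddCommGroup W] [Module ℝ W] [Fintype ι] (f : ι → W) :
    ∃ u : W, ∀ S : Set ι, u ∈ Submodule.span ℝ (f '' S) → Submodule.span ℝ (f '' S) = ⊤ := by
  classical
  by_contra hcon
  push Not at hcon
  let s : Set (Set ι) := {S | Submodule.span ℝ (f '' S) ≠ ⊤}
  obtain ⟨i, hi⟩ := Subspace.exists_eq_top_of_iUnion_eq_univ (k := ℝ) (E := W)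
    (p := fun S : s => Submodule.span ℝ (f '' S.1)) (by
      ext u
      obtain ⟨S, hS, hS'⟩ := hcon u
      simp only [Set.mem_iUnion, Set.mem_univ, iff_true]
      exact ⟨⟨S, hS'⟩, hS⟩)
  exact i.2 hi

theorem aux_generic_w {W ι : Type*} [AddCommGroup W] [Module ℝ W] [Fintype ι] (f : ι → W) :
    ∃ ω : ι → ℝ, ∀ (l : Module.Dual ℝ W) (T : Finset ι), (∀ i ∈ T, l (f i) = ω i) →
      LinearIndepOn ℝ f (T : Set ι) := by
  classical
  let s : Set (Finset ι) := {T | ¬ LinearIndepOn ℝ f (T : Set ι)}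
  have hs : ∀ T : s, ∃ a : ι → ℝ, ∑ i ∈ T.1, a i • f i = 0 ∧ ∃ i ∈ T.1, a i ≠ 0 := by
    intro T
    have := T.2
    simp only [s, Set.mem_ofPred_eq, linearIndepOn_finset_iff] at this
    push Not at this
    exact this
  choose a ha ha' using hs
  let φ : s → ((ι → ℝ) →ₗ[ℝ] ℝ) := fun T => ∑ i ∈ T.1, a T i • LinearMap.proj i
  have hφ : ∀ T ω, φ T ω = ∑ i ∈ T.1, a T i * ω i := by
    intro T ω; simp [φ]
  by_contra hcon
  push Not at hcon
  obtain ⟨T, hT⟩ := Subspace.exists_eq_top_of_iUnion_eq_univ (k := ℝ) (E := ι → ℝ)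
    (p := fun T : s => LinearMap.ker (φ T)) (by
      ext ω
      obtain ⟨l, S, hS, hS'⟩ := hcon ω
      simp only [Set.mem_iUnion, Set.mem_univ, iff_true]
      refine ⟨⟨S, hS'⟩, ?_⟩
      simp only [SetLike.mem_coe, LinearMap.mem_ker, hφ]
      have := congrArg l (ha ⟨S, hS'⟩)
      simp only [map_sum, map_smul, smul_eq_mul, map_zero] at this
      rw [← this]
      exact Finset.sum_congr rfl fun i hi => by rw [hS i hi])
  obtain ⟨i, hi, hne⟩ := ha' T
  have : φ T (Pi.single i 1) = 0 := by
    rw [← LinearMap.mem_ker, hT]; trivial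
  rw [hφ] at this
  simp [Pi.single_apply, hi] at this
  exact hne this

open Classical in
theorem aux_count {W ι : Type*} [AddCommGroup W] [Module ℝ W] [Fintype ι] (f : ι → W)
    (k : ℕ) (hW : Module.finrank ℝ W = 2 * k + 1) (ω : ι → ℝ)
    (hω : ∀ (l : Module.Dual ℝ W) (T : Finset ι), (∀ i ∈ T, l (f i) = ω i) →
      LinearIndepOn ℝ f (T : Set ι)) :
    ∃ 𝒯 : Finset (Finset ι), 𝒯.card ≤ 2 * ((k + 1) * (Fintype.card ι + 1) ^ k) ∧
      (∀ T ∈ 𝒯, T.card = 2 * k + 1) ∧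
      ∀ l : Module.Dual ℝ W, (∀ i, l (f i) ≤ ω i) →
        Submodule.span ℝ (f '' {i | l (f i) = ω i}) = ⊤ →
        Finset.univ.filter (fun i => l (f i) = ω i) ∈ 𝒯 := by
  obtain ⟨u, hu⟩ := aux_generic_u f
  let 𝒯 : Finset (Finset ι) := Finset.univ.filter (fun T => ∃ l : Module.Dual ℝ W,
    (∀ i, l (f i) ≤ ω i) ∧ (∀ i, i ∈ T ↔ l (f i) = ω i) ∧
      Submodule.span ℝ (f '' (T : Set ι)) = ⊤)
  have hcard : ∀ T ∈ 𝒯, T.card = 2 * k + 1 := by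
    intro T hT
    obtain ⟨l, hl, hTl, hsp⟩ := (Finset.mem_filter.1 hT).2
    have hind := hω l T (fun i hi => (hTl i).1 hi)
    have := finrank_span_eq_card hind
    rw [← Set.image_eq_range, hsp, finrank_top, hW] at this
    simpa using this.symm
  let R : Finset ι → Finset ι → ℝ → Prop := fun T S σ =>
    ∃ (l : Module.Dual ℝ W) (c : ι → ℝ), (∀ i, l (f i) ≤ ω i) ∧ (∀ i, i ∈ T ↔ l (f i) = ω i) ∧
      Submodule.span ℝ (f '' (T : Set ι)) = ⊤ ∧ ∑ i ∈ T, c i • f i = u ∧ (∀ i ∈ T, c i ≠ 0) ∧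
      S = T.filter (fun i => 0 < σ * c i)
  have hex : ∀ T : Finset ι, T ∈ 𝒯 → ∃ q : Finset ι × Bool, q.1.card ≤ k ∧
      R T q.1 (if q.2 then 1 else -1) := by
    intro T hT
    have hc := hcard T hT
    obtain ⟨l, hl, hTl, hsp⟩ := (Finset.mem_filter.1 hT).2
    have hind := hω l T (fun i hi => (hTl i).1 hi)
    have hmem : u ∈ Submodule.span ℝ (f '' (T : Set ι)) := by rw [hsp]; trivial
    obtain ⟨c, hcu⟩ : ∃ c : ι → ℝ, ∑ i ∈ T, c i • f i = u := by
      obtain ⟨c, hcu⟩ := (Submodule.mem_span_image_finset_iff_exists_fun ℝ).1 hmem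
      refine ⟨fun i => if h : i ∈ T then c ⟨i, h⟩ else 0, ?_⟩
      rw [← hcu, ← Finset.sum_coe_sort]
      exact Finset.sum_congr rfl fun i _ => by simp
    have hcne : ∀ i ∈ T, c i ≠ 0 := by
      intro i hi h0
      have h2 : u ∈ Submodule.span ℝ (f '' ((T.erase i : Finset ι) : Set ι)) := by
        rw [← hcu, ← Finset.add_sum_erase _ _ hi, h0, zero_smul, zero_add]
        exact Submodule.sum_mem _ fun j hj => Submodule.smul_mem _ _
          (Submodule.subset_span ⟨j, hj, rfl⟩)
      have h3 := hu _ h2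
      have hind2 : LinearIndepOn ℝ f ((T.erase i : Finset ι) : Set ι) :=
        hω l _ (fun i hi => (hTl i).1 (Finset.mem_of_mem_erase hi))
      have := finrank_span_eq_card hind2
      rw [← Set.image_eq_range, h3, finrank_top, hW] at this
      have h6 : Fintype.card ((T.erase i : Finset ι) : Set ι) = (T.erase i).card :=
        Fintype.card_coe _
      rw [h6, Finset.card_erase_of_mem hi] at this
      omega
    by_cases hle : (T.filter (fun i => 0 < c i)).card ≤ k
    · exact ⟨(T.filter (fun i => 0 < c i), true), hle, l, c, hl, hTl, hsp, hcu, hcne, by simp⟩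
    · refine ⟨(T.filter (fun i => c i < 0), false), ?_, l, c, hl, hTl, hsp, hcu, hcne, by simp⟩
      have h4 := Finset.card_filter_add_card_filter_not (s := T) (fun i => 0 < c i)
      have h5 : T.filter (fun i => c i < 0) ⊆ T.filter (fun i => ¬ 0 < c i) := by
        intro i hi
        simp only [Finset.mem_filter] at hi ⊢
        exact ⟨hi.1, by linarith [hi.2]⟩
      have := Finset.card_le_card h5
      simp only
      omega
  have hone : ∀ (T1 T2 S : Finset ι) (σ : ℝ) (l1 l2 : Module.Dual ℝ W) (c : ι → ℝ),
      (∀ i, l2 (f i) ≤ ω i) → (∀ i ∈ S, l2 (f i) = ω i) → (∀ i ∈ T1, l1 (f i) = ω i) →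
      ∑ i ∈ T1, c i • f i = u → S = T1.filter (fun i => 0 < σ * c i) →
      (∀ i ∈ T1, 0 ≤ σ * c i * (l2 (f i) - ω i)) ∧
      σ * (l2 u - l1 u) = ∑ i ∈ T1, σ * c i * (l2 (f i) - ω i) := by
    intro T1 T2 S σ l1 l2 c hl2 hS2 hT1 hc hS
    refine ⟨?_, ?_⟩
    · intro i hi
      by_cases hp : 0 < σ * c i
      · rw [hS2 i (by rw [hS]; simp [hi, hp])]; simp
      · exact mul_nonneg_of_nonpos_of_nonpos (not_lt.1 hp) (by linarith [hl2 i])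
    · rw [← hc]
      simp only [map_sum, map_smul, smul_eq_mul]
      rw [← Finset.sum_sub_distrib, Finset.mul_sum]
      refine Finset.sum_congr rfl fun i hi => ?_
      rw [hT1 i hi]; ring
  have huniq : ∀ T1 T2 S σ, σ ≠ 0 → R T1 S σ → R T2 S σ → T1 = T2 := by
    rintro T1 T2 S σ hσ ⟨l1, c1, hl1, ht1, hs1, hu1, hn1, hS1⟩ ⟨l2, c2, hl2, ht2, hs2, hu2, hn2, hS2⟩
    have hST1 : ∀ i ∈ S, l1 (f i) = ω i := fun i hi => (ht1 i).1 (by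
      rw [hS1] at hi; exact (Finset.mem_filter.1 hi).1)
    have hST2 : ∀ i ∈ S, l2 (f i) = ω i := fun i hi => (ht2 i).1 (by
      rw [hS2] at hi; exact (Finset.mem_filter.1 hi).1)
    obtain ⟨a1, b1⟩ := hone T1 T2 S σ l1 l2 c1 hl2 hST2 (fun i hi => (ht1 i).1 hi) hu1 hS1
    obtain ⟨a2, b2⟩ := hone T2 T1 S σ l2 l1 c2 hl1 hST1 (fun i hi => (ht2 i).1 hi) hu2 hS2
    have e1 := Finset.sum_nonneg a1
    have e2 := Finset.sum_nonneg a2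
    have e3 : ∑ i ∈ T1, σ * c1 i * (l2 (f i) - ω i) = 0 := by linarith
    rw [Finset.sum_eq_zero_iff_of_nonneg a1] at e3
    have heq : l2 = l1 := by
      refine LinearMap.ext_on hs1 ?_
      rintro _ ⟨i, hi, rfl⟩
      have := e3 i hi
      rw [(ht1 i).1 hi]
      rcases mul_eq_zero.1 this with h | h
      · exact absurd h (mul_ne_zero hσ (hn1 i hi))
      · linarith
    ext i
    rw [ht1, ht2, heq]
  refine ⟨𝒯, ?_, hcard, ?_⟩
  · choose! q hq hR using hex
    let 𝒮 : Finset (Finset ι) := (Finset.range (k + 1)).biUnion (fun i => Finset.univ.powersetCard i)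
    have hinj : Set.InjOn q 𝒯 := by
      intro T1 h1 T2 h2 h
      have r1 := hR T1 h1
      have r2 := hR T2 h2
      rw [← h] at r2
      exact huniq _ _ _ _ (by split_ifs <;> norm_num) r1 r2
    have hmaps : ∀ T ∈ 𝒯, q T ∈ 𝒮 ×ˢ (Finset.univ : Finset Bool) := by
      intro T hT
      simp only [Finset.mem_product, Finset.mem_univ, and_true, 𝒮, Finset.mem_biUnion,
        Finset.mem_range, Finset.mem_powersetCard, Finset.subset_univ, true_and]
      exact ⟨_, Nat.lt_succ_of_le (hq T hT), rfl⟩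
    have h1 := Finset.card_le_card_of_injOn q hmaps hinj
    have h2 : 𝒮.card ≤ (k + 1) * (Fintype.card ι + 1) ^ k := by
      refine Finset.card_biUnion_le.trans ?_
      have : ∀ i ∈ Finset.range (k + 1), (Finset.powersetCard i (Finset.univ : Finset ι)).card ≤
          (Fintype.card ι + 1) ^ k := by
        intro i hi
        rw [Finset.card_powersetCard, Finset.card_univ]
        refine (Nat.choose_le_pow _ _).trans ?_
        refine (Nat.pow_le_pow_left (Nat.le_succ _) i).trans ?_
        exact Nat.pow_le_pow_right (Nat.succ_pos _) (by simp at hi; omega)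
      refine (Finset.sum_le_sum this).trans ?_
      simp
    rw [Finset.card_product] at h1
    simp at h1
    linarith
  · intro l hl hsp
    simp only [𝒯, Finset.mem_filter, Finset.mem_univ, true_and]
    exact ⟨l, hl, fun i => by simp, by simpa using hsp⟩

end Upper

section Upper2

theorem aux_span {E : Type*} [AddCommGroup E] [Module ℝ E] (V : Set E)
    (h : affineSpan ℝ V = ⊤) : Submodule.span ℝ ((fun v : E => (v, (1 : ℝ))) '' V) = ⊤ := by
  set U := Submodule.span ℝ ((fun v : E => (v, (1 : ℝ))) '' V) with hU
  have hne : V.Nonempty := by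
    rw [← affineSpan_nonempty ℝ, h]; exact ⟨0, trivial⟩
  have h1 : vectorSpan ℝ V ≤ U.comap (LinearMap.inl ℝ E ℝ) := by
    rw [vectorSpan_def, Submodule.span_le]
    rintro _ ⟨a, ha, b, hb, rfl⟩
    have h2 := U.sub_mem (Submodule.subset_span ⟨a, ha, rfl⟩) (Submodule.subset_span ⟨b, hb, rfl⟩)
    simpa using h2
  have h2 : vectorSpan ℝ V = ⊤ := by
    rw [← direction_affineSpan, h]; simp
  rw [h2, top_le_iff] at h1
  have h3 : ∀ w : E, (w, (0 : ℝ)) ∈ U := by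
    intro w
    have : w ∈ U.comap (LinearMap.inl ℝ E ℝ) := by rw [h1]; trivial
    simpa using this
  obtain ⟨v, hv⟩ := hne
  have h4 : ((0 : E), (1 : ℝ)) ∈ U := by
    have := U.sub_mem (Submodule.subset_span ⟨v, hv, rfl⟩) (h3 v)
    simpa using this
  rw [eq_top_iff]
  rintro ⟨w, s⟩ -
  have := U.add_mem (h3 w) (U.smul_mem s h4)
  simpa using this

open Classical in
theorem aux_faces {k : ℕ} {E : Type*} [NormedAddCommGroup E] [NormedSpace ℝ E]
    [FiniteDimensional ℝ E] (hE : Module.finrank ℝ E = 2 * k) (V : Finset (E))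
    (haff : affineSpan ℝ (V : Set (E)) = ⊤) :
    {F | IsExposed ℝ (convexHull ℝ (V : Set (E))) F ∧
      F.Nonempty}.Finite ∧
    {F | IsExposed ℝ (convexHull ℝ (V : Set (E))) F ∧
      F.Nonempty}.ncard ≤ (2 * ((k + 1) * (V.card + 1) ^ k)) * 2 ^ (2 * k + 1) := by
  set P := convexHull ℝ (V : Set E) with hPdef
  let f : V → E × ℝ := fun v => (v.1, 1)
  have hspan : Submodule.span ℝ (Set.range f) = ⊤ := by
    rw [← aux_span (V : Set E) haff]
    congr 1
    ext x
    simp [f]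
  have hW : Module.finrank ℝ (E × ℝ) = 2 * k + 1 := by simp [hE]
  obtain ⟨ω, hω⟩ := aux_generic_w f
  obtain ⟨𝒯, h𝒯, hcard, hmem⟩ := aux_count f k hW ω hω
  -- initial feasible functional
  obtain ⟨M, hM⟩ := (Set.finite_range (fun i => -ω i)).bddAbove
  let l0 : Module.Dual ℝ (E × ℝ) := (-M) • LinearMap.snd ℝ E ℝ
  have hl0 : ∀ i, l0 (f i) ≤ ω i := by
    intro i
    have : -ω i ≤ M := hM ⟨i, rfl⟩
    simp [l0, f]; linarith
  let 𝒰 : Finset (Finset V) := 𝒯.biUnion Finset.powerset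
  let Φ : Finset V → Set E := fun S => {x | x ∈ P ∧ (x, (1 : ℝ)) ∈ Submodule.span ℝ (f '' (S : Set V))}
  have hsub : {F | IsExposed ℝ P F ∧ F.Nonempty} ⊆ ((𝒰.image Φ : Finset (Set E)) : Set (Set E)) := by
    rintro F ⟨hF, hne⟩
    obtain ⟨g, hg⟩ := hF hne
    obtain ⟨x0, hx0⟩ := hne
    have hx0' := hx0
    rw [hg] at hx0'
    let m := g x0
    have hmF : ∀ x, x ∈ F ↔ x ∈ P ∧ g x = m := by
      intro x
      constructor
      · intro hx
        rw [hg] at hx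
        exact ⟨hx.1, le_antisymm (hx0'.2 x hx.1) (hx.2 x0 hx0'.1)⟩
      · rintro ⟨hx, he⟩
        rw [hg]
        exact ⟨hx, fun y hy => he ▸ hx0'.2 y hy⟩
    let lam : Module.Dual ℝ (E × ℝ) :=
      g.toLinearMap ∘ₗ LinearMap.fst ℝ E ℝ - m • LinearMap.snd ℝ E ℝ
    have hlam : ∀ x s, lam (x, s) = g x - m * s := by
      intro x s; simp [lam]
    have hVP : ∀ v : V, v.1 ∈ P := fun v => subset_convexHull ℝ _ v.2
    let G : Finset V := Finset.univ.filter (fun v => v.1 ∈ F)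
    obtain ⟨l1, a1, -, c1⟩ := aux_ext f ω G lam (by
      intro i hi
      simp only [G, Finset.mem_filter] at hi
      have := ((hmF _).1 hi.2).2
      simp [f, hlam, this]) (by
      intro i hi
      simp only [G, Finset.mem_filter, Finset.mem_univ, true_and] at hi
      have h1 : g i.1 ≠ m := fun h => hi ((hmF _).2 ⟨hVP i, h⟩)
      have h2 : g i.1 ≤ m := hx0'.2 _ (hVP i)
      have h3 := lt_of_le_of_ne h2 h1
      simp [f, hlam]; linarith) _ l0 hl0 rfl
    obtain ⟨l2, a2, b2, c2⟩ := aux_ext f ω Finset.univ 0 (by simp) (by simp) _ l1 a1 rfl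
    have hT := hmem l2 a2 (by
      rw [← top_le_iff, ← hspan, Submodule.span_le]
      rintro _ ⟨i, rfl⟩
      simpa using c2 i (Finset.mem_univ _))
    set T := Finset.univ.filter (fun i => l2 (f i) = ω i) with hTdef
    simp only [Finset.coe_image, Set.mem_image, Finset.mem_coe]
    refine ⟨T ∩ G, ?_, ?_⟩
    · simp only [𝒰, Finset.mem_biUnion, Finset.mem_powerset]
      exact ⟨T, hT, Finset.inter_subset_left⟩
    · have hle : ∀ i ∈ G, f i ∈ Submodule.span ℝ (f '' ((T ∩ G : Finset V) : Set V)) := by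
        intro i hi
        refine Submodule.span_mono (Set.image_mono ?_) (c1 i hi)
        rintro j ⟨hj, hj'⟩
        simp [hTdef, hj, b2 j (Finset.mem_univ _) hj']
      ext x
      rw [hmF]
      simp only [Φ]
      refine and_congr_right fun hx => ?_
      constructor
      · intro hxs
        have : Submodule.span ℝ (f '' ((T ∩ G : Finset V) : Set V)) ≤ LinearMap.ker lam := by
          rw [Submodule.span_le]
          rintro _ ⟨i, hi, rfl⟩
          simp only [Finset.coe_inter, Set.mem_inter_iff, Finset.mem_coe, G, Finset.mem_filter] at hi
          have := ((hmF _).1 hi.2.2).2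
          simp [f, hlam, this]
        have := this hxs
        rw [LinearMap.mem_ker, hlam] at this
        linarith
      · intro hgx
        rw [hPdef, Finset.mem_convexHull'] at hx
        obtain ⟨w, hw0, hw1, hwx⟩ := hx
        have hz : ∀ y ∈ V, w y * (m - g y) = 0 := by
          have h1 : ∑ y ∈ V, w y * (m - g y) = 0 := by
            have := congrArg g hwx
            simp only [map_sum, map_smul, smul_eq_mul] at this
            simp only [mul_sub, Finset.sum_sub_distrib, ← Finset.sum_mul]
            rw [this, hw1, hgx]; ring
          rwa [Finset.sum_eq_zero_iff_of_nonneg] at h1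
          intro y hy
          exact mul_nonneg (hw0 y hy) (by linarith [hx0'.2 y (hVP ⟨y, hy⟩)])
        have hx1 : (x, (1 : ℝ)) = ∑ y ∈ V, w y • (y, (1 : ℝ)) := by
          ext1
          · simp [Prod.fst_sum, hwx]
          · simp [Prod.snd_sum, hw1]
        rw [hx1]
        refine Submodule.sum_mem _ fun y hy => ?_
        rcases mul_eq_zero.1 (hz y hy) with h | h
        · rw [h, zero_smul]; exact Submodule.zero_mem _
        · refine Submodule.smul_mem _ _ (hle ⟨y, hy⟩ ?_)
          simp only [G, Finset.mem_filter, Finset.mem_univ, true_and]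
          exact (hmF _).2 ⟨hVP ⟨y, hy⟩, by linarith⟩
  refine ⟨(Finset.finite_toSet _).subset hsub, ?_⟩
  refine (Set.ncard_le_ncard hsub (Finset.finite_toSet _)).trans ?_
  rw [Set.ncard_coe_finset]
  refine Finset.card_image_le.trans (Finset.card_biUnion_le.trans ?_)
  have h1 : ∀ T ∈ 𝒯, T.powerset.card ≤ 2 ^ (2 * k + 1) := by
    intro T hT
    rw [Finset.card_powerset, hcard T hT]
  refine (Finset.sum_le_sum h1).trans ?_
  rw [Finset.sum_const, smul_eq_mul]
  refine Nat.mul_le_mul_right _ ?_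
  simpa using h𝒯

theorem aux_upper {k j n : ℕ} (P : Set (EuclideanSpace ℝ (Fin (2 * k)))) (hP : IsCSPolytope P)
    (haff : affineSpan ℝ P = ⊤) (hn : (Set.extremePoints ℝ P).ncard = n) :
    {F | IsExposed ℝ P F ∧ F.Nonempty}.Finite ∧
    faceCount P j ≤ (2 * ((k + 1) * (n + 1) ^ k)) * 2 ^ (2 * k + 1) := by
  classical
  obtain ⟨⟨V, hV⟩, -⟩ := hP
  have hfin : (Set.extremePoints ℝ P).Finite := by
    rw [hV]; exact V.finite_toSet.subset extremePoints_convexHull_subset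
  have hPX : P = convexHull ℝ (Set.extremePoints ℝ P) := by
    have h1 := closure_convexHull_extremePoints (s := P)
      (by rw [hV]; exact V.finite_toSet.isCompact_convexHull ℝ) (by rw [hV]; exact convex_convexHull _ _)
    rw [(hfin.isClosed_convexHull ℝ).closure_eq] at h1
    exact h1.symm
  have hX := aux_faces (k := k) (by simp) hfin.toFinset (by
    rw [← affineSpan_convexHull]
    simpa [← hPX] using haff)
  rw [Set.Finite.coe_toFinset, ← hPX, ← Set.ncard_eq_toFinset_card _ hfin, hn] at hX
  refine ⟨hX.1, le_trans ?_ hX.2⟩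
  exact Set.ncard_le_ncard (fun F hF => ⟨hF.1, hF.2.1⟩) hX.1

end Upper2

section Lower

theorem aux_face {E : Type*} [NormedAddCommGroup E] [NormedSpace ℝ E] (V : Set E)
    (φ : StrongDual ℝ E) (hle : ∀ v ∈ V, φ v ≤ 1) (hne : ∃ v ∈ V, φ v = 1) :
    IsExposed ℝ (convexHull ℝ V) {x | x ∈ convexHull ℝ V ∧ φ x = 1} ∧
    {x | x ∈ convexHull ℝ V ∧ φ x = 1} = convexHull ℝ {v | v ∈ V ∧ φ v = 1} := by
  have hP : ∀ x ∈ convexHull ℝ V, φ x ≤ 1 := by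
    intro x hx
    exact convexHull_min (t := {x | φ x ≤ 1}) hle
      (convex_halfSpace_le φ.toLinearMap.isLinear 1) hx
  obtain ⟨v0, hv0, hv1⟩ := hne
  refine ⟨fun _ => ⟨φ, ?_⟩, ?_⟩
  · ext x
    refine and_congr_right fun hx => ⟨fun h y hy => h ▸ hP y hy, fun h => ?_⟩
    exact le_antisymm (hP x hx) (hv1 ▸ h v0 (subset_convexHull ℝ _ hv0))
  · apply Set.Subset.antisymm
    · rintro x ⟨hx, hx1⟩
      rw [mem_convexHull_iff_exists_fintype] at hx
      obtain ⟨ι, _, w, z, hw0, hw1, hz, hwx⟩ := hx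
      have h0 : ∀ i, w i * (1 - φ (z i)) = 0 := by
        have h1 : ∑ i, w i * (1 - φ (z i)) = 0 := by
          have := congrArg φ hwx
          simp only [map_sum, map_smul, smul_eq_mul] at this
          simp only [mul_sub, Finset.sum_sub_distrib, mul_one]
          rw [this, hw1, hx1]; ring
        rw [Finset.sum_eq_zero_iff_of_nonneg] at h1
        · exact fun i => h1 i (Finset.mem_univ _)
        · intro i _
          exact mul_nonneg (hw0 i) (by linarith [hle _ (hz i)])
      classical
      rw [← hwx]
      have h2 : ∑ i, w i • z i = ∑ i, w i • (if φ (z i) = 1 then z i else v0) := by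
        refine Finset.sum_congr rfl fun i _ => ?_
        split_ifs with h
        · rfl
        · rcases mul_eq_zero.1 (h0 i) with h' | h'
          · simp [h']
          · exact absurd (by linarith) h
      rw [h2]
      refine (convex_convexHull ℝ _).sum_mem (fun i _ => hw0 i) hw1 fun i _ => ?_
      apply subset_convexHull
      split_ifs with h
      · exact ⟨hz i, h⟩
      · exact ⟨hv0, hv1⟩
    · apply convexHull_min
      · rintro v ⟨hv, h⟩
        exact ⟨subset_convexHull ℝ _ hv, h⟩
      · exact (convex_convexHull ℝ V).inter (convex_hyperplane φ.toLinearMap.isLinear 1)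

/-- point on the `i`-th parabola -/
noncomputable def auxPt {k : ℕ} (M : ℝ) (i : Fin k) (t : ℝ) : EuclideanSpace ℝ (Fin (2 * k)) :=
  EuclideanSpace.single (finProdFinEquiv ((0 : Fin 2), i)) t +
    EuclideanSpace.single (finProdFinEquiv ((1 : Fin 2), i)) (M - t ^ 2)

theorem auxPt_zero {k : ℕ} (M : ℝ) (i i' : Fin k) (t : ℝ) :
    auxPt M i t (finProdFinEquiv ((0 : Fin 2), i')) = if i' = i then t else 0 := by
  simp [auxPt]

theorem auxPt_one {k : ℕ} (M : ℝ) (i i' : Fin k) (t : ℝ) :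
    auxPt M i t (finProdFinEquiv ((1 : Fin 2), i')) = if i' = i then M - t ^ 2 else 0 := by
  simp [auxPt]

/-- the functional -/
noncomputable def auxPhi {k : ℕ} (β b : Fin k → ℝ) : StrongDual ℝ (EuclideanSpace ℝ (Fin (2 * k))) :=
  ∑ i, β i • (EuclideanSpace.proj (finProdFinEquiv ((1 : Fin 2), i)) +
    b i • EuclideanSpace.proj (finProdFinEquiv ((0 : Fin 2), i)))

theorem auxPhi_pt {k : ℕ} (β b : Fin k → ℝ) (M : ℝ) (i : Fin k) (t : ℝ) :
    auxPhi β b (auxPt M i t) = β i * (M - t ^ 2 + b i * t) := by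
  simp only [auxPhi, sum_apply, smul_apply, add_apply, smul_eq_mul]
  rw [Finset.sum_eq_single i]
  · simp [auxPt_zero, auxPt_one]
  · intro j _ hj; simp [hj, auxPt_zero, auxPt_one]
  · simp

theorem aux_linind {k : ℕ} (M : ℝ) (a : Fin k → ℝ) (hM : 0 < M) (ha : ∀ i, 0 ≤ a i) :
    LinearIndependent ℝ (fun p : Fin k × Fin 2 => auxPt M p.1 (a p.1 + (p.2 : ℕ))) := by
  rw [Fintype.linearIndependent_iff]
  intro g hg
  rw [Fintype.sum_prod_type] at hg
  have key : ∀ i, g (i, 0) = 0 ∧ g (i, 1) = 0 := by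
    intro i
    have h0 := congrArg (fun x : EuclideanSpace ℝ (Fin (2 * k)) =>
      x (finProdFinEquiv ((0 : Fin 2), i))) hg
    have h1 := congrArg (fun x : EuclideanSpace ℝ (Fin (2 * k)) =>
      x (finProdFinEquiv ((1 : Fin 2), i))) hg
    simp [Fin.sum_univ_two, auxPt_zero, Finset.sum_add_distrib] at h0
    simp [Fin.sum_univ_two, auxPt_one, Finset.sum_add_distrib] at h1
    have hai := ha i
    have hpos : 0 < M + a i * (a i + 1) := by positivity
    have e0 : g (i, 0) * (M + a i * (a i + 1)) = 0 := by
      linear_combination (a i + 1) * h1 - (M - (a i + 1) ^ 2) * h0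
    have e1 : g (i, 1) * (M + a i * (a i + 1)) = 0 := by
      linear_combination (M - a i ^ 2) * h0 - a i * h1
    exact ⟨(mul_eq_zero.1 e0).resolve_right hpos.ne', (mul_eq_zero.1 e1).resolve_right hpos.ne'⟩
  rintro ⟨i, e⟩
  fin_cases e
  · exact (key i).1
  · exact (key i).2

/-- the vertices -/
noncomputable def auxV {k : ℕ} (hk : 0 < k) (h : ℕ) (p : Fin h × Bool) :
    EuclideanSpace ℝ (Fin (2 * k)) :=
  (if p.2 then (1 : ℝ) else -1) •
    auxPt ((h : ℝ) ^ 2 + 1) ⟨p.1 % k, Nat.mod_lt _ hk⟩ ((p.1 / k : ℕ) : ℝ)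

theorem auxV_true {k : ℕ} (hk : 0 < k) (h : ℕ) (i : Fin k) (t : ℕ) (ht : t * k + i < h) :
    auxV hk h (⟨t * k + i, ht⟩, true) = auxPt ((h : ℝ) ^ 2 + 1) i t := by
  have h1 : (t * k + i) / k = t := by
    rw [mul_comm, Nat.mul_add_div hk, Nat.div_eq_of_lt i.2, add_zero]
  have h2 : (t * k + i) % k = i := by
    rw [mul_comm, Nat.mul_add_mod, Nat.mod_eq_of_lt i.2]
  simp [auxV, h1, h2]

theorem aux_int (a t e : ℕ) (he : e ≤ 1) :
    -(t : ℝ) ^ 2 + (2 * a + e) * t ≤ a * (a + e) ∧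
    (-(t : ℝ) ^ 2 + (2 * a + e) * t = a * (a + e) ↔ t = a ∨ t = a + e) := by
  have hid : (a : ℝ) * (a + e) - (-(t : ℝ) ^ 2 + (2 * a + e) * t)
      = ((((t : ℤ) - a) * ((t : ℤ) - (a + e)) : ℤ) : ℝ) := by push_cast; ring
  have hnn : (0 : ℤ) ≤ ((t : ℤ) - a) * ((t : ℤ) - (a + e)) := by
    rcases le_or_gt t a with h | h
    · exact mul_nonneg_of_nonpos_of_nonpos (by omega) (by omega)
    · exact mul_nonneg (by omega) (by omega)
  have hnn' : (0 : ℝ) ≤ ((((t : ℤ) - a) * ((t : ℤ) - (a + e)) : ℤ) : ℝ) := by exact_mod_cast hnn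
  refine ⟨by linarith, ?_⟩
  have : (-(t : ℝ) ^ 2 + (2 * a + e) * t = a * (a + e)) ↔
      ((((t : ℤ) - a) * ((t : ℤ) - (a + e)) : ℤ) : ℝ) = 0 := by
    constructor <;> intro h <;> linarith
  rw [this, Int.cast_eq_zero, mul_eq_zero]
  omega

/-- behaviour of the functional with data `a`, `e`, supported on index set `I` -/
theorem aux_val {k : ℕ} (hk : 0 < k) (h : ℕ) (a e : Fin k → ℕ) (he : ∀ i, e i ≤ 1)
    (I : Fin k → Prop) [DecidablePred I] (p : Fin h × Bool) :
    let φ := auxPhi (fun i => if I i then 1 / ((h : ℝ) ^ 2 + 1 + a i * (a i + e i)) else 0)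
      (fun i => 2 * a i + e i)
    φ (auxV hk h p) ≤ 1 ∧ (φ (auxV hk h p) = 1 ↔ p.2 = true ∧ I ⟨p.1 % k, Nat.mod_lt _ hk⟩ ∧
      ((p.1 / k : ℕ) = a ⟨p.1 % k, Nat.mod_lt _ hk⟩ ∨
       (p.1 / k : ℕ) = a ⟨p.1 % k, Nat.mod_lt _ hk⟩ + e ⟨p.1 % k, Nat.mod_lt _ hk⟩)) := by
  intro φ
  obtain ⟨q, b⟩ := p
  set i : Fin k := ⟨q % k, Nat.mod_lt _ hk⟩ with hi
  set t : ℕ := q / k with ht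
  have hth : (t : ℝ) ≤ h := by
    have : t ≤ h := (Nat.div_le_self _ _).trans q.2.le
    exact_mod_cast this
  have hv : φ (auxV hk h (q, b)) = (if b then (1 : ℝ) else -1) *
      ((if I i then 1 / ((h : ℝ) ^ 2 + 1 + a i * (a i + e i)) else 0) *
        ((h : ℝ) ^ 2 + 1 - t ^ 2 + (2 * a i + e i) * t)) := by
    simp only [auxV, map_smul, smul_eq_mul, φ, auxPhi_pt, ← hi, ← ht]
  rw [hv]
  by_cases hI : I i
  · obtain ⟨h1, h2⟩ := aux_int (a i) t (e i) (he i)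
    have hD : (0 : ℝ) < (h : ℝ) ^ 2 + 1 + a i * (a i + e i) := by positivity
    have ht2 : (t : ℝ) ^ 2 ≤ (h : ℝ) ^ 2 := by gcongr
    have hN : (0 : ℝ) < (h : ℝ) ^ 2 + 1 - t ^ 2 + (2 * a i + e i) * t := by
      have : (0 : ℝ) ≤ (2 * a i + e i) * t := by positivity
      linarith
    simp only [hI, if_true, true_and]
    rw [one_div_mul_eq_div]
    cases b
    · have := div_pos hN hD
      simp only [Bool.false_eq_true, if_false, false_and, iff_false]
      exact ⟨by linarith, by linarith⟩
    · simp only [if_true, one_mul, true_and]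
      rw [div_le_one hD, div_eq_one_iff_eq hD.ne', ← h2]
      exact ⟨by linarith, by constructor <;> intro h <;> linarith⟩
  · simp [hI]

end Lower

section Lower2

theorem aux_lower (k j h : ℕ) (hk : 0 < k) (hkj : k ≤ j) (hj : j < 2 * k) (hh : 2 * k ≤ h) :
    ∃ P : Set (EuclideanSpace ℝ (Fin (2 * k))), IsCSPolytope P ∧ affineSpan ℝ P = ⊤ ∧
      (Set.extremePoints ℝ P).ncard = 2 * h ∧ (h / k - 1) ^ k ≤ faceCount P j := by
  classical
  set v := auxV hk h with hv
  set M : ℝ := (h : ℝ) ^ 2 + 1 with hM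
  have hMpos : 0 < M := by positivity
  set P := convexHull ℝ (Set.range v) with hP
  have hneg : ∀ q b, v (q, !b) = - v (q, b) := by
    intro q b
    cases b <;> simp [hv, auxV]
  -- each vertex is exposed
  have hext1 : ∀ q, v (q, true) ∈ Set.extremePoints ℝ P ∧ ∀ p, v p = v (q, true) → p = (q, true) := by
    intro q
    set i0 : Fin k := ⟨q % k, Nat.mod_lt _ hk⟩ with hi0
    set φ := auxPhi (fun i : Fin k => if i = i0 then
      1 / ((h : ℝ) ^ 2 + 1 + ((q / k : ℕ) : ℝ) * (((q / k : ℕ) : ℝ) + (0 : ℕ))) else 0)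
      (fun i => 2 * ((q / k : ℕ) : ℝ) + (0 : ℕ)) with hφ
    have hval : ∀ p, φ (v p) ≤ 1 ∧ (φ (v p) = 1 ↔ p = (q, true)) := by
      intro p
      have := aux_val hk h (fun _ => q / k) (fun _ => 0) (by simp) (fun i => i = i0) p
      refine ⟨this.1, this.2.trans ?_⟩
      obtain ⟨r, b⟩ := p
      simp only [hi0, Fin.mk.injEq, add_zero, or_self, Prod.mk.injEq]
      constructor
      · rintro ⟨h1, h2, h3⟩
        refine ⟨?_, h1⟩
        ext
        rw [← Nat.div_add_mod r.1 k, ← Nat.div_add_mod q.1 k, h2, h3]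
      · rintro ⟨rfl, rfl⟩
        simp
    have hq1 : φ (v (q, true)) = 1 := (hval _).2.2 rfl
    obtain ⟨hex, hF⟩ := aux_face (Set.range v) φ (by rintro _ ⟨p, rfl⟩; exact (hval p).1)
      ⟨_, ⟨(q, true), rfl⟩, hq1⟩
    have hs : {x | x ∈ Set.range v ∧ φ x = 1} = {v (q, true)} := by
      ext x
      constructor
      · rintro ⟨⟨p, rfl⟩, hp⟩
        rw [(hval p).2.1 hp]; rfl
      · rintro rfl
        exact ⟨⟨_, rfl⟩, hq1⟩
    rw [hF, hs, convexHull_singleton] at hex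
    refine ⟨exposedPoints_subset_extremePoints (mem_exposedPoints_iff_exposed_singleton.2 hex), ?_⟩
    intro p hp
    rw [← (hval p).2, hp, hq1]
  have hcs : P = -P := by
    rw [hP, ← convexHull_neg]
    congr 1
    ext x
    simp only [Set.mem_neg, Set.mem_range]
    constructor
    · rintro ⟨⟨q, b⟩, rfl⟩
      exact ⟨(q, !b), hneg q b⟩
    · rintro ⟨⟨q, b⟩, hx⟩
      exact ⟨(q, !b), by rw [hneg, hx, neg_neg]⟩
  have hnegP : ∀ x, x ∈ P → -x ∈ P := by
    intro x hx
    rw [hcs] at hx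
    simpa using hx
  have hinj : Function.Injective v := by
    rintro ⟨q, b⟩ ⟨q', b'⟩ he
    cases b'
    · have h2 : v (q, !b) = v (q', true) := by
        rw [hneg, he, ← hneg]; rfl
      have := (hext1 q').2 _ h2
      simp only [Prod.mk.injEq] at this ⊢
      exact ⟨this.1, by simpa using this.2⟩
    · exact (hext1 q').2 _ he
  have hext : Set.extremePoints ℝ P = Set.range v := by
    apply Set.Subset.antisymm extremePoints_convexHull_subset
    rintro _ ⟨⟨q, b⟩, rfl⟩
    cases b
    · have h1 := (hext1 q).1
      have h2 : v (q, false) = - v (q, true) := hneg q true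
      rw [h2]
      rw [mem_extremePoints] at h1 ⊢
      refine ⟨hnegP _ h1.1, ?_⟩
      intro x1 hx1 x2 hx2 hs
      have e1 : -x1 ∈ P := hnegP _ hx1
      have e2 : -x2 ∈ P := hnegP _ hx2
      have := h1.2 _ e1 _ e2 (by
        obtain ⟨s, t, hs0, ht0, hst, hx⟩ := hs
        refine ⟨s, t, hs0, ht0, hst, ?_⟩
        rw [smul_neg, smul_neg, ← neg_add, hx, neg_neg])
      exact ⟨neg_eq_iff_eq_neg.1 this.1, neg_eq_iff_eq_neg.1 this.2⟩
    · exact (hext1 q).1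
  have hkey : ∀ (i : Fin k) (t : ℕ) (ht : t * k + i < h),
      v (⟨t * k + i, ht⟩, true) = auxPt M i t := auxV_true hk h
  have hR : ∀ (i : Fin k) (t : ℕ), t < h / k → t * k + i < h := by
    intro i t ht
    have h1 : (t + 1) * k ≤ h := (Nat.le_div_iff_mul_le hk).1 ht
    have := i.2
    nlinarith
  have h2k : 2 ≤ h / k := (Nat.le_div_iff_mul_le hk).2 hh
  have hCS : IsCSPolytope P := ⟨⟨Finset.univ.image v, by simp [hP]⟩, hcs⟩
  have haff : affineSpan ℝ P = ⊤ := by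
    rw [hP, affineSpan_convexHull]
    have hne : (Set.range v).Nonempty :=
      ⟨_, (⟨0 * k + (⟨0, hk⟩ : Fin k), hR _ 0 (by omega)⟩, true), rfl⟩
    rw [AffineSubspace.affineSpan_eq_top_iff_vectorSpan_eq_top_of_nonempty ℝ _ _ hne]
    have hli := aux_linind M (fun _ : Fin k => 0) hMpos (by simp)
    have htop := hli.span_eq_top_of_card_eq_finrank' (by simp [mul_comm])
    rw [eq_top_iff, ← htop, Submodule.span_le]
    rintro _ ⟨⟨i, e⟩, rfl⟩
    have e1 := hkey i e (hR i e (by omega))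
    have h3 : v (⟨e * k + i, hR i e (by omega)⟩, true) -ᵥ v (⟨e * k + i, hR i e (by omega)⟩, !true)
        ∈ vectorSpan ℝ (Set.range v) := vsub_mem_vectorSpan ℝ ⟨_, rfl⟩ ⟨_, rfl⟩
    rw [hneg, vsub_eq_sub, sub_neg_eq_add, ← two_smul ℝ, e1] at h3
    have h4 := Submodule.smul_mem _ (1 / 2 : ℝ) h3
    rw [smul_smul] at h4
    norm_num at h4
    simpa using h4
  have hcard : (Set.extremePoints ℝ P).ncard = 2 * h := by
    rw [hext, ← Set.image_univ, Set.ncard_image_of_injective _ hinj, Set.ncard_univ]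
    simp [mul_comm]
  refine ⟨P, hCS, haff, hcard, ?_⟩
  have hfin := (aux_upper (j := j) P hCS haff hcard).1
  -- the faces
  set R := h / k - 1 with hRdef
  let e : Fin k → ℕ := fun i => if i.1 < j + 1 - k then 1 else 0
  have he : ∀ i, e i ≤ 1 := by intro i; simp only [e]; split_ifs <;> simp
  let φ : (Fin k → Fin R) → StrongDual ℝ (EuclideanSpace ℝ (Fin (2 * k))) := fun a =>
    auxPhi (fun i : Fin k => if True then
      1 / ((h : ℝ) ^ 2 + 1 + ((a i : ℕ) : ℝ) * (((a i : ℕ) : ℝ) + (e i : ℕ))) else 0)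
      (fun i => 2 * ((a i : ℕ) : ℝ) + (e i : ℕ))
  have hφ : ∀ a p, φ a (v p) ≤ 1 ∧ (φ a (v p) = 1 ↔ p.2 = true ∧
      ((p.1 / k : ℕ) = a ⟨p.1 % k, Nat.mod_lt _ hk⟩ ∨
       (p.1 / k : ℕ) = a ⟨p.1 % k, Nat.mod_lt _ hk⟩ + e ⟨p.1 % k, Nat.mod_lt _ hk⟩)) := by
    intro a p
    have := aux_val hk h (fun i => a i) e he (fun _ => True) p
    simpa only [true_and] using this
  have hφpt : ∀ a (i : Fin k) (t : ℕ), t < h / k →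
      (φ a (auxPt M i t) = 1 ↔ t = a i ∨ t = a i + e i) := by
    intro a i t ht
    rw [← hkey i t (hR i t ht), (hφ a _).2]
    have h1 : (t * k + i) / k = t := by
      rw [mul_comm, Nat.mul_add_div hk, Nat.div_eq_of_lt i.2, add_zero]
    have h2 : (t * k + i) % k = i := by
      rw [mul_comm, Nat.mul_add_mod, Nat.mod_eq_of_lt i.2]
    simp [h1, h2]
  have haR : ∀ (a : Fin k → Fin R) i, (a i : ℕ) + 1 < h / k := by
    intro a i
    have := (a i).2
    omega
  let Φ : (Fin k → Fin R) → Set (EuclideanSpace ℝ (Fin (2 * k))) := fun a =>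
    {x | x ∈ P ∧ φ a x = 1}
  have hmemP : ∀ (i : Fin k) (t : ℕ), t < h / k → auxPt M i t ∈ P := by
    intro i t ht
    rw [← hkey i t (hR i t ht)]
    exact subset_convexHull ℝ _ ⟨_, rfl⟩
  have hΦinj : Function.Injective Φ := by
    intro a a' haa
    have hone : ∀ a a' : Fin k → Fin R, Φ a = Φ a' → ∀ i, (a' i : ℕ) ≤ a i := by
      intro a a' haa i
      have hlt : (a i : ℕ) < h / k := by have := haR a i; omega
      have h1 : auxPt M i ((a i : ℕ) : ℝ) ∈ Φ a :=
        ⟨hmemP i _ hlt, (hφpt a i _ hlt).2 (Or.inl rfl)⟩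
      rw [haa] at h1
      rcases (hφpt a' i _ hlt).1 h1.2 with h | h <;> omega
    ext i
    exact le_antisymm (hone a' a haa.symm i) (hone a a' haa i)
  have hΦ : ∀ a, IsExposed ℝ P (Φ a) ∧ (Φ a).Nonempty ∧
      Module.finrank ℝ (vectorSpan ℝ (Φ a)) = j := by
    intro a
    have hlt : ∀ i, (a i : ℕ) < h / k := by intro i; have := haR a i; omega
    let i0 : Fin k := ⟨0, hk⟩
    obtain ⟨hex, hF⟩ := aux_face (Set.range v) (φ a) (by rintro _ ⟨p, rfl⟩; exact (hφ a p).1)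
      ⟨auxPt M i0 ((a i0 : ℕ) : ℝ), ⟨_, hkey i0 _ (hR i0 _ (hlt i0))⟩,
        (hφpt a i0 _ (hlt i0)).2 (Or.inl rfl)⟩
    refine ⟨hex, ⟨auxPt M i0 ((a i0 : ℕ) : ℝ), hmemP _ _ (hlt i0),
      (hφpt a i0 _ (hlt i0)).2 (Or.inl rfl)⟩, ?_⟩
    have hli := aux_linind M (fun i : Fin k => ((a i : ℕ) : ℝ)) hMpos (by simp)
    have hsk : j + 1 - k ≤ k := by omega
    let g : Fin k ⊕ Fin (j + 1 - k) → Fin k × Fin 2 :=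
      Sum.elim (fun i => (i, 0)) (fun i => (Fin.castLE hsk i, 1))
    have hg : Function.Injective g := by
      rintro (x | x) (y | y) hxy <;> simp [g] at hxy ⊢
      · exact hxy
      · exact hxy
    have hli2 := (hli.comp g hg).affineIndependent
    have hr := hli2.finrank_vectorSpan (n := j) (by simp; omega)
    have hset : {x | x ∈ Set.range v ∧ φ a x = 1} =
        Set.range ((fun p : Fin k × Fin 2 => auxPt M p.1 (((a p.1 : ℕ) : ℝ) + (p.2 : ℕ))) ∘ g) := by
      ext x
      constructor
      · rintro ⟨⟨⟨q, b⟩, rfl⟩, hx⟩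
        obtain ⟨hb, hx⟩ := (hφ a _).2.1 hx
        simp only at hb
        subst hb
        set i : Fin k := ⟨q % k, Nat.mod_lt _ hk⟩ with hi
        have hvq : v (q, true) = auxPt M i ((q / k : ℕ) : ℝ) := by
          simp [hv, auxV, hM, hi]
        rw [hvq]
        simp only at hx
        by_cases hq : (q / k : ℕ) = a i
        · exact ⟨Sum.inl i, by simp [g, hq]⟩
        · have hq2 := hx.resolve_left hq
          have hi2 : i.1 < j + 1 - k := by
            by_contra hcon
            simp only [e, hcon, if_false, add_zero] at hq2
            exact hq hq2
          refine ⟨Sum.inr ⟨i.1, hi2⟩, ?_⟩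
          have hq3 : (q / k : ℕ) = a i + 1 := by
            simpa only [e, ← hi, hi2, if_true] using hq2
          rw [hq3]
          have hc : Fin.castLE hsk ⟨i.1, hi2⟩ = i := rfl
          simp only [g, Function.comp, Sum.elim_inr, hc]
          simp
      · rintro ⟨i | i, rfl⟩
        · simp only [g, Function.comp, Sum.elim_inl]
          have := (hφpt a i _ (hlt i)).2 (Or.inl rfl)
          refine ⟨⟨_, (hkey i _ (hR i _ (hlt i))).trans (by simp)⟩, by simpa using this⟩
        · simp only [g, Function.comp, Sum.elim_inr]
          set i' := Fin.castLE hsk i with hi'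
          have hei : e i' = 1 := by simp [e, hi']
          have := (hφpt a i' _ (haR a i')).2 (Or.inr (by rw [hei]))
          refine ⟨⟨_, (hkey i' _ (hR i' _ (haR a i'))).trans (by simp)⟩, by simpa using this⟩
    have hv1 : vectorSpan ℝ (Φ a) = vectorSpan ℝ {x | x ∈ Set.range v ∧ φ a x = 1} := by
      rw [← direction_affineSpan, ← direction_affineSpan, ← affineSpan_convexHull {x | x ∈ Set.range v ∧ φ a x = 1}, ← hF]
    rw [hv1, hset]
    exact hr
  have hc1 : (Set.range Φ).ncard = R ^ k := by
    rw [← Set.image_univ, Set.ncard_image_of_injective _ hΦinj, Set.ncard_univ]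
    simp
  rw [← hc1]
  refine Set.ncard_le_ncard ?_ (hfin.subset fun F hF => ⟨hF.1, hF.2.1⟩)
  rintro _ ⟨a, rfl⟩
  exact hΦ a

end Lower2

/-- Theorem 7.1: for fixed even `d = 2k` and `k ≤ j < 2k`, the quantity `fmax(d,n;j)`
is of order `n^k`: there are constants `γ, Γ > 0` with
`γ n^k ≤ fmax(d,n;j) ≤ Γ n^k` for all sufficiently large even `n`. -/
theorem stmt_17 (k j : ℕ) (hk : 0 < k) (hkj : k ≤ j) (hj : j < 2 * k) :
    ∃ γ Γ : ℝ, 0 < γ ∧ 0 < Γ ∧ ∃ N : ℕ, ∀ n : ℕ, N ≤ n → Even n →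
      γ * (n : ℝ) ^ k ≤ (fmax (2 * k) n j : ℝ) ∧
      (fmax (2 * k) n j : ℝ) ≤ Γ * (n : ℝ) ^ k := by
  classical
  have hkR : (0 : ℝ) < k := by exact_mod_cast hk
  refine ⟨(1 / (4 * k)) ^ k, (2 * ((k + 1) * 2 ^ k)) * 2 ^ (2 * k + 1), by positivity, by positivity,
    8 * k, ?_⟩
  intro n hn hev
  obtain ⟨h, hh⟩ := hev
  have hnh : n = 2 * h := by omega
  set B : ℕ := (2 * ((k + 1) * (n + 1) ^ k)) * 2 ^ (2 * k + 1) with hB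
  have hub : ∀ m ∈ {m : ℕ | ∃ P : Set (EuclideanSpace ℝ (Fin (2 * k))),
      IsCSPolytope P ∧ affineSpan ℝ P = ⊤ ∧
      (Set.extremePoints ℝ P).ncard = n ∧ faceCount P j = m}, m ≤ B := by
    rintro m ⟨P, h1, h2, h3, rfl⟩
    exact (aux_upper P h1 h2 h3).2
  obtain ⟨P, h1, h2, h3, h4⟩ := aux_lower k j h hk hkj hj (by omega)
  have hmem : faceCount P j ∈ {m : ℕ | ∃ P : Set (EuclideanSpace ℝ (Fin (2 * k))),
      IsCSPolytope P ∧ affineSpan ℝ P = ⊤ ∧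
      (Set.extremePoints ℝ P).ncard = n ∧ faceCount P j = m} :=
    ⟨P, h1, h2, by rw [h3, hnh], rfl⟩
  have hlow : (h / k - 1) ^ k ≤ fmax (2 * k) n j := h4.trans (le_csSup ⟨B, hub⟩ hmem)
  have hupp : fmax (2 * k) n j ≤ B := csSup_le ⟨_, hmem⟩ hub
  constructor
  · refine le_trans ?_ (Nat.cast_le.2 hlow)
    rw [Nat.cast_pow, ← mul_pow]
    refine pow_le_pow_left₀ (by positivity) ?_ k
    have h5 : h < (h / k - 1) * k + 2 * k := by
      have := Nat.div_add_mod h k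
      have h6 := Nat.mod_lt h hk
      have h7 : 1 ≤ h / k := (Nat.le_div_iff_mul_le hk).2 (by omega)
      obtain ⟨c, hc⟩ := Nat.exists_eq_add_of_le h7
      rw [hc] at this ⊢
      simp only [Nat.add_sub_cancel_left]
      nlinarith
    have h5' : (h : ℝ) < ((h / k - 1 : ℕ) : ℝ) * k + 2 * k := by exact_mod_cast h5
    have h8 : (4 * k : ℝ) ≤ h := by
      have : 4 * k ≤ h := by omega
      exact_mod_cast this
    rw [hnh, one_div, inv_mul_le_iff₀ (by positivity)]
    push_cast
    nlinarith
  · refine (Nat.cast_le.2 hupp).trans ?_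
    rw [hB]
    push_cast
    have h9 : ((n : ℝ) + 1) ^ k ≤ 2 ^ k * (n : ℝ) ^ k := by
      rw [← mul_pow]
      refine pow_le_pow_left₀ (by positivity) ?_ k
      have : 1 ≤ n := by omega
      have : (1 : ℝ) ≤ n := by exact_mod_cast this
      linarith
    calc (2 * (((k : ℝ) + 1) * ((n : ℝ) + 1) ^ k)) * 2 ^ (2 * k + 1)
        ≤ (2 * (((k : ℝ) + 1) * (2 ^ k * (n : ℝ) ^ k))) * 2 ^ (2 * k + 1) := by gcongr
      _ = _ := by ring
end

section
/- Let z_1, …, z_6 ∈ ℂ be distinct points of modulus 1 lying on an arc of the unit circle of length at most arccos(1/8), and let D(z) be a raked self-inversive polynomial of degree 10 such that D(z_j) = 0 for j = 1, …, 6. Then none of the remaining four roots of D (counted with multiplicity) has absolute value 1. -/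
open Polynomial

/-- A raked self-inversive polynomial of degree `4k-2`: a complex polynomial of degree
exactly `4k-2` all of whose odd-degree coefficients vanish except possibly the middle
one (degree `2k-1`), and which satisfies `D(z) = z^{4k-2} · conj(D(1/conj z))`. -/
def RakedSelfInversive (k : ℕ) (D : Polynomial ℂ) : Prop :=
  D.natDegree = 4 * k - 2 ∧ D ≠ 0 ∧
  (∀ i : ℕ, Odd i → i ≠ 2 * k - 1 → D.coeff i = 0) ∧
  (∀ z : ℂ, z ≠ 0 →
    D.eval z = z ^ (4 * k - 2) * (starRingEnd ℂ) (D.eval (((starRingEnd ℂ) z)⁻¹)))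


/-- every finite set of zeros of `f` has at most `n` elements -/
def ZerosLe (f : ℝ → ℝ) (n : ℕ) : Prop := ∀ s : Finset ℝ, (∀ x ∈ s, f x = 0) → s.card ≤ n

lemma zeros_rolle {f f' : ℝ → ℝ} {n : ℕ} (hf : ∀ x, HasDerivAt f (f' x) x) (h : ZerosLe f' n)
    (s e : Finset ℝ) (hs : ∀ x ∈ s, f x = 0) (hes : e ⊆ s) (he : ∀ x ∈ e, f' x = 0) :
    s.card + e.card ≤ n + 1 := by
  have hfin : {x | f' x = 0}.Finite := by
    by_contra hinf
    obtain ⟨t, ht, hc⟩ := Set.Infinite.exists_subset_card_eq hinf (n + 1)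
    have := h t (fun x hx => ht hx)
    omega
  set t := hfin.toFinset with ht
  have h1 : s.card ≤ (t \ s).card + 1 := by
    apply Finset.card_le_sdiff_of_interleaved
    intro x hx y hy hxy _
    obtain ⟨z, hz, hz'⟩ := exists_hasDerivAt_eq_zero (f := f) (f' := f') hxy
      (fun u _ => (hf u).continuousAt.continuousWithinAt) (by rw [hs x hx, hs y hy])
      (fun u _ => hf u)
    exact ⟨z, by simp [ht, hz'], hz.1, hz.2⟩
  have h2 : ((t \ s) ∪ e).card ≤ n := by
    apply h
    intro x hx
    rcases Finset.mem_union.1 hx with hx | hx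
    · have := (Finset.mem_sdiff.1 hx).1
      simpa [ht] using this
    · exact he x hx
  rw [Finset.card_union_of_disjoint] at h2
  · omega
  · exact Finset.disjoint_of_subset_right hes Finset.sdiff_disjoint

lemma ZerosLe.succ {f f' : ℝ → ℝ} {n : ℕ} (h : ZerosLe f' n) (hf : ∀ x, HasDerivAt f (f' x) x) :
    ZerosLe f (n + 1) := fun s hs => by
  simpa using zeros_rolle hf h s ∅ hs (by simp) (by simp)

/-- successive derivatives of `(1+x^2)^(5/2)` -/
noncomputable def hh : ℕ → ℝ → ℝ
  | 0, x => √(1 + x ^ 2) ^ 5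
  | 1, x => 5 * x * √(1 + x ^ 2) ^ 3
  | 2, x => (5 + 20 * x ^ 2) * √(1 + x ^ 2)
  | 3, x => (45 * x + 60 * x ^ 3) / √(1 + x ^ 2)
  | 4, x => (45 + 180 * x ^ 2 + 120 * x ^ 4) / √(1 + x ^ 2) ^ 3
  | 5, x => (225 * x + 300 * x ^ 3 + 120 * x ^ 5) / √(1 + x ^ 2) ^ 5
  | _, x => 225 / √(1 + x ^ 2) ^ 7

lemma sqrt_sq' (x : ℝ) : √(1 + x ^ 2) ^ 2 = 1 + x ^ 2 := Real.sq_sqrt (by positivity)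
lemma sqrt_pos' (x : ℝ) : 0 < √(1 + x ^ 2) := Real.sqrt_pos.2 (by positivity)

lemma hasDerivAt_s (x : ℝ) : HasDerivAt (fun x : ℝ => √(1 + x ^ 2)) (x / √(1 + x ^ 2)) x := by
  have h1 : HasDerivAt (fun x : ℝ => 1 + x ^ 2) (2 * x) x := by
    simpa using (hasDerivAt_pow 2 x).const_add 1
  convert h1.sqrt (by positivity) using 1
  field_simp

lemma hasDerivAt_hh (k : ℕ) (hk : k < 6) (x : ℝ) : HasDerivAt (hh k) (hh (k + 1) x) x := by
  have hs := hasDerivAt_s x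
  have h2 := sqrt_sq' x
  have h0 := sqrt_pos' x
  have hp (n : ℕ) : HasDerivAt (fun x : ℝ => x ^ n) (n * x ^ (n - 1)) x := hasDerivAt_pow n x
  have hsp (n : ℕ) : HasDerivAt (fun x : ℝ => √(1 + x ^ 2) ^ n)
      (n * √(1 + x ^ 2) ^ (n - 1) * (x / √(1 + x ^ 2))) x := hs.pow n
  have hi : HasDerivAt (fun x : ℝ => x) 1 x := hasDerivAt_id x
  interval_cases k
  · refine (hsp 5).congr_deriv ?_
    simp only [hh]; field_simp; norm_num; ring
  · refine ((hi.const_mul 5).mul (hsp 3)).congr_deriv ?_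
    simp only [hh]
    generalize √(1 + x ^ 2) = s at *
    field_simp
    norm_num
    linear_combination (5 * s ^ 2) * h2
  · refine ((((hp 2).const_mul 20).const_add 5).mul hs).congr_deriv ?_
    simp only [hh]
    generalize √(1 + x ^ 2) = s at *
    field_simp
    norm_num
    linear_combination (40 * x) * h2
  · refine (((hi.const_mul 45).add ((hp 3).const_mul 60)).div hs h0.ne').congr_deriv ?_
    simp only [hh]
    generalize √(1 + x ^ 2) = s at *
    field_simp
    norm_num
    linear_combination (45 + 180 * x ^ 2) * h2
  · refine (((((hp 2).const_mul 180).const_add 45).add ((hp 4).const_mul 120)).div (hsp 3) (pow_pos h0 _).ne').congr_deriv ?_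
    simp only [hh]
    generalize √(1 + x ^ 2) = s at *
    field_simp
    norm_num
    linear_combination s ^ 2 * (360 * x + 480 * x ^ 3) * h2
  · refine ((((hi.const_mul 225).add ((hp 3).const_mul 300)).add ((hp 5).const_mul 120)).div (hsp 5) (pow_pos h0 _).ne').congr_deriv ?_
    simp only [hh]
    generalize √(1 + x ^ 2) = s at *
    field_simp
    norm_num
    linear_combination s ^ 4 * (225 + 900 * x ^ 2 + 600 * x ^ 4) * h2

lemma hh5_lt (x : ℝ) : |hh 5 x| < 120 := by
  have h0 := sqrt_pos' x
  have h2 := sqrt_sq' x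
  simp only [hh]
  rw [abs_div, abs_of_pos (a := √(1 + x ^ 2) ^ 5) (by positivity), div_lt_iff₀ (by positivity)]
  apply abs_lt_of_sq_lt_sq _ (by positivity)
  have : (120 * √(1 + x ^ 2) ^ 5) ^ 2 = 14400 * (1 + x ^ 2) ^ 5 := by
    calc _ = 14400 * (√(1 + x ^ 2) ^ 2) ^ 5 := by ring
      _ = _ := by rw [h2]
  rw [this]
  nlinarith [sq_nonneg x, sq_nonneg (x ^ 2)]

lemma hh6_pos (x : ℝ) : 0 < hh 6 x := by
  have h0 := sqrt_pos' x
  simp only [hh]; positivity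

lemma hh6_le (x : ℝ) : hh 6 x ≤ 225 := by
  have h1 : 1 ≤ √(1 + x ^ 2) := by
    rw [Real.one_le_sqrt]; nlinarith [sq_nonneg x]
  simp only [hh]
  apply div_le_self (by norm_num) (one_le_pow₀ h1)

lemma hh_chain (q : ℝ[X]) (n : ℕ) (hn : n ≤ 6)
    (h : ∀ x, hh n x - (derivative^[n] q).eval x ≠ 0) (k : ℕ) (hk : k ≤ n) :
    ZerosLe (fun x => hh (n - k) x - (derivative^[n - k] q).eval x) k := by
  induction k with
  | zero =>
    intro s hs
    by_contra hc
    obtain ⟨x, hx⟩ := Finset.card_pos.1 (by omega : 0 < s.card)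
    exact h x (hs x hx)
  | succ k ih =>
    refine (ih (by omega)).succ fun x => ?_
    have e : n - k = (n - (k + 1)) + 1 := by omega
    have := (hasDerivAt_hh (n - (k + 1)) (by omega) x).sub ((derivative^[n - (k + 1)] q).hasDerivAt x)
    rw [e, Function.iterate_succ_apply']
    exact this

lemma iter_eval (q : ℝ[X]) (n : ℕ) (hq : q.natDegree ≤ n) (x : ℝ) :
    (derivative^[n] q).eval x = n.factorial * q.coeff n := by
  have h1 : (derivative^[n] q).natDegree ≤ 0 := by
    have := natDegree_iterate_derivative q n
    omega
  rw [eq_C_of_natDegree_le_zero h1, eval_C, coeff_iterate_derivative]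
  simp [Nat.descFactorial_self]

/-- leading coefficient bound -/
lemma lead_bound (q : ℝ[X]) (hq : q.natDegree ≤ 5) (s : Finset ℝ) (hs : s.card = 6)
    (h : ∀ x ∈ s, q.eval x = √(1 + x ^ 2) ^ 5) : |q.coeff 5| ≠ 1 := by
  intro hc
  have := hh_chain q 5 (by norm_num) (fun x h0 => by
    rw [iter_eval q 5 hq] at h0
    have h1 := hh5_lt x
    rw [sub_eq_zero.1 h0, abs_mul, hc] at h1
    norm_num [Nat.factorial] at h1) 5 le_rfl s (fun x hx => by simp [hh, h x hx])
  omega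

lemma double_bound (q : ℝ[X]) (hq : q.natDegree ≤ 5) (s : Finset ℝ) (hs : s.card = 6)
    (h : ∀ x ∈ s, q.eval x = √(1 + x ^ 2) ^ 5) (y : ℝ) (hy : y ∈ s) :
    hh 1 y - q.derivative.eval y ≠ 0 := by
  intro hc
  have h5 := hh_chain q 6 (by norm_num) (fun x h0 => by
    rw [iter_eval q 6 (by omega), coeff_eq_zero_of_natDegree_lt (by omega)] at h0
    have h1 := hh6_pos x
    simp at h0
    linarith) 5 (by norm_num)
  have := zeros_rolle (f := fun x => hh 0 x - q.eval x)
    (f' := fun x => hh 1 x - q.derivative.eval x)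
    (fun x => (hasDerivAt_hh 0 (by norm_num) x).sub (q.hasDerivAt x)) h5 s {y}
    (fun x hx => by simp [hh, h x hx]) (by simpa using hy) (by simpa using hc)
  simp at this
  omega

lemma interp_err (q : ℝ[X]) (hq : q.natDegree ≤ 5) (s : Finset ℝ) (hs : s.card = 6)
    (h : ∀ x ∈ s, q.eval x = √(1 + x ^ 2) ^ 5) (h0 : (0 : ℝ) ∉ s) :
    ∃ κ : ℝ, 0 < κ ∧ κ ≤ 5 / 16 ∧ 1 - q.eval 0 = κ * ∏ x ∈ s, x := by
  have hp : ∏ x ∈ s, x ≠ 0 := Finset.prod_ne_zero_iff.2 fun x hx hx0 => h0 (hx0 ▸ hx)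
  set κ := (1 - q.eval 0) / ∏ x ∈ s, x with hκ
  set M : ℝ[X] := ∏ x ∈ s, (X - C x) with hM
  have hMm : M.Monic := monic_prod_of_monic _ _ fun x _ => monic_X_sub_C x
  have hMd : M.natDegree = 6 := by
    rw [hM, natDegree_prod_of_monic _ _ fun x _ => monic_X_sub_C x]; simp [hs]
  have hM6 : M.coeff 6 = 1 := by rw [← hMd]; exact hMm
  set P := q + C κ * M with hP
  have hPd : P.natDegree ≤ 6 := by
    refine (natDegree_add_le _ _).trans (max_le (by omega) ((natDegree_C_mul_le _ _).trans hMd.le))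
  have hP6 : P.coeff 6 = κ := by
    simp [hP, hM6, coeff_eq_zero_of_natDegree_lt (by omega : q.natDegree < 6)]
  have hM0 : M.eval 0 = ∏ x ∈ s, x := by
    have : ∏ x ∈ s, -x = ∏ x ∈ s, x := by
      have := Finset.prod_const (s := s) (-1 : ℝ)
      rw [hs] at this
      calc ∏ x ∈ s, -x = ∏ x ∈ s, (-1) * x := by simp
        _ = _ := by rw [Finset.prod_mul_distrib, this]; norm_num
    simpa [hM, eval_prod] using this
  have heq : 1 - q.eval 0 = κ * ∏ x ∈ s, x := by rw [hκ]; field_simp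
  have key : ¬ ∀ x, hh 6 x - (derivative^[6] P).eval x ≠ 0 := by
    intro hne
    have := hh_chain P 6 le_rfl hne 6 le_rfl (insert 0 s) (fun x hx => by
      rcases Finset.mem_insert.1 hx with rfl | hx
      · simp [hh, hP, hM0, ← heq]
      · have : M.eval x = 0 := by
          rw [hM, eval_prod]; exact Finset.prod_eq_zero hx (by simp)
        simp [hh, hP, this, h x hx])
    rw [Finset.card_insert_of_notMem h0] at this
    omega
  push Not at key
  obtain ⟨x, hx⟩ := key
  rw [iter_eval P 6 hPd, hP6] at hx
  have h1 := hh6_pos x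
  have h2 := hh6_le x
  norm_num [Nat.factorial] at hx
  exact ⟨κ, by linarith, by linarith, heq⟩

lemma pr_bound {p r : ℝ} (hp : 0 < p) (hr : 0 < r)
    (h : √(1 + p ^ 2) * √(1 + r ^ 2) ≤ 8 * (1 - p * r)) : p * r ^ 2 ≤ 2 := by
  have h1 := sqrt_pos' p
  have h2 := sqrt_pos' r
  have hpr : 0 < 1 - p * r := by nlinarith [mul_pos h1 h2]
  have h3 : (1 + p ^ 2) * (1 + r ^ 2) ≤ (8 * (1 - p * r)) ^ 2 := by
    calc _ = (√(1 + p ^ 2) * √(1 + r ^ 2)) ^ 2 := by rw [mul_pow, sqrt_sq', sqrt_sq']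
      _ ≤ _ := by gcongr
  have h4 : p + r ≤ 8 * (1 - p * r) := by
    refine le_of_abs_le (abs_le_of_sq_le_sq ?_ (by linarith))
    nlinarith
  nlinarith [sq_nonneg (r - 4), mul_pos hp hr, mul_le_mul_of_nonneg_left h4 hr.le]

lemma prod_bound (s : Finset ℝ) (hs : s.card = 6) (h0 : (0 : ℝ) ∉ s)
    (hneg : ∃ x ∈ s, x < 0) (hpos : ∃ x ∈ s, 0 < x)
    (h : ∀ x ∈ s, ∀ y ∈ s, √(1 + x ^ 2) * √(1 + y ^ 2) ≤ 8 * (1 + x * y)) :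
    ∏ x ∈ s, x ≤ 4 := by
  set N := s.filter (· < 0) with hN
  set P := s.filter (¬ · < 0) with hP
  have hcard : N.card + P.card = 6 := by rw [← hs]; exact Finset.card_filter_add_card_filter_not _
  have hprod : (∏ x ∈ N, x) * ∏ x ∈ P, x = ∏ x ∈ s, x := Finset.prod_filter_mul_prod_filter_not _ _ _
  have hNne : N.Nonempty := by
    obtain ⟨x, hx, hx0⟩ := hneg; exact ⟨x, by simp [hN, hx, hx0]⟩
  have hPne : P.Nonempty := by
    obtain ⟨x, hx, hx0⟩ := hpos; exact ⟨x, by simp [hP, hx, hx0.le]⟩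
  obtain ⟨a, ha, hamax⟩ := Finset.exists_min_image N id hNne
  obtain ⟨r, hr, hrmax⟩ := Finset.exists_max_image P id hPne
  have hNn : ∀ x ∈ N, x ∈ s ∧ x < 0 := fun x hx => by simpa [hN] using hx
  have hPp : ∀ x ∈ P, x ∈ s ∧ 0 < x := fun x hx => by
    have h1 : x ∈ s ∧ 0 ≤ x := by simpa [hP] using hx
    exact ⟨h1.1, lt_of_le_of_ne h1.2 fun h => h0 (h ▸ h1.1)⟩
  have hNp : ∏ x ∈ N, x = (-1) ^ N.card * ∏ x ∈ N, -x := by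
    rw [← Finset.prod_const, ← Finset.prod_mul_distrib]; simp
  have hN1 : ∏ x ∈ N, -x ≤ (-a) ^ N.card := by
    rw [← Finset.prod_const]
    exact Finset.prod_le_prod (fun x hx => by linarith [(hNn x hx).2])
      (fun x hx => by have := hamax x hx; simp at this; linarith)
  have hN0 : 0 ≤ ∏ x ∈ N, -x := Finset.prod_nonneg fun x hx => by linarith [(hNn x hx).2]
  have hP1 : ∏ x ∈ P, x ≤ r ^ P.card := by
    rw [← Finset.prod_const]
    exact Finset.prod_le_prod (fun x hx => by linarith [(hPp x hx).2])
      (fun x hx => by simpa using hrmax x hx)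
  have hP0 : 0 ≤ ∏ x ∈ P, x := Finset.prod_nonneg fun x hx => by linarith [(hPp x hx).2]
  have ha0 := (hNn a ha).2
  have hr0 := (hPp r hr).2
  have hb : √(1 + (-a) ^ 2) * √(1 + r ^ 2) ≤ 8 * (1 - (-a) * r) := by
    have := h a (hNn a ha).1 r (hPp r hr).1
    rw [neg_sq]; linarith
  have b1 := pr_bound (by linarith : 0 < -a) hr0 hb
  have b2 := pr_bound hr0 (by linarith : 0 < -a) (by rw [mul_comm]; linarith)
  rw [← hprod, hNp]
  have hle : (∏ x ∈ N, -x) * ∏ x ∈ P, x ≤ (-a) ^ N.card * r ^ P.card :=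
    mul_le_mul hN1 hP1 hP0 (hN0.trans hN1)
  rcases Nat.even_or_odd N.card with he | ho
  · rw [he.neg_one_pow, one_mul]
    refine hle.trans ?_
    have c1 := hNne.card_pos
    have c2 := hPne.card_pos
    obtain ⟨k, hk⟩ := he
    have : N.card = 2 ∨ N.card = 4 := by omega
    rcases this with hc | hc
    · have : P.card = 4 := by omega
      rw [hc, this]
      have : 0 ≤ -a * r ^ 2 := by have : 0 < -a := by linarith
                                  positivity
      nlinarith
    · have : P.card = 2 := by omega
      rw [hc, this]
      have : 0 ≤ r * (-a) ^ 2 := by positivity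
      nlinarith
  · rw [ho.neg_one_pow]
    nlinarith [mul_nonneg hN0 hP0]

/-- real raked trigonometric polynomial on the unit circle -/
noncomputable def TT (c : ℝ) (e1 e3 e5 z : ℂ) : ℝ := c + (e1 * z + e3 * z ^ 3 + e5 * z ^ 5).re

noncomputable def QP (a1 a3 a5 : ℂ) : ℝ[X] :=
  C (a1.re + a3.re + a5.re) + C (-a1.im - 3 * a3.im - 5 * a5.im) * X
  + C (2 * a1.re - 2 * a3.re - 10 * a5.re) * X ^ 2
  + C (-2 * a1.im - 2 * a3.im + 10 * a5.im) * X ^ 3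
  + C (a1.re - 3 * a3.re + 5 * a5.re) * X ^ 4
  + C (-a1.im + a3.im - a5.im) * X ^ 5

lemma QP_deg (a1 a3 a5 : ℂ) : (QP a1 a3 a5).natDegree ≤ 5 := by
  unfold QP; compute_degree

lemma QP_coeff (a1 a3 a5 : ℂ) : (QP a1 a3 a5).coeff 5 = -a1.im + a3.im - a5.im := by
  unfold QP
  simp only [coeff_add, coeff_C_mul, coeff_X_pow, coeff_C, coeff_X]
  norm_num

lemma re_aux (a1 a3 a5 : ℂ) (u s t : ℝ) (hst : t * s = 1) (hs : s ^ 2 = 1 + u ^ 2) :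
    (a1 * ((1 + u * Complex.I) * t) + a3 * ((1 + u * Complex.I) * t) ^ 3
      + a5 * ((1 + u * Complex.I) * t) ^ 5).re * s ^ 5 = (QP a1 a3 a5).eval u := by
  have e : (1 + u * Complex.I : ℂ) = ⟨1, u⟩ := by
    apply Complex.ext <;> simp
  have h1 : (a1 * ((1 + u * Complex.I) * t)).re = t * (a1.re - a1.im * u) := by
    rw [e]; simp; ring
  have h3 : (a3 * ((1 + u * Complex.I) * t) ^ 3).re =
      t ^ 3 * (a3.re * (1 - 3 * u ^ 2) - a3.im * (3 * u - u ^ 3)) := by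
    rw [e]; simp [pow_succ]; ring
  have h5 : (a5 * ((1 + u * Complex.I) * t) ^ 5).re =
      t ^ 5 * (a5.re * (1 - 10 * u ^ 2 + 5 * u ^ 4) - a5.im * (5 * u - 10 * u ^ 3 + u ^ 5)) := by
    rw [e]; simp [pow_succ]; ring
  rw [Complex.add_re, Complex.add_re, h1, h3, h5]
  have i1 : t * s ^ 5 = (1 + u ^ 2) ^ 2 := by
    rw [← hs]; linear_combination s ^ 4 * hst
  have i3 : t ^ 3 * s ^ 5 = 1 + u ^ 2 := by
    rw [← hs]; linear_combination s ^ 2 * (t ^ 2 * s ^ 2 + t * s + 1) * hst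
  have i5 : t ^ 5 * s ^ 5 = 1 := by rw [← mul_pow, hst, one_pow]
  simp only [QP, eval_add, eval_mul, eval_C, eval_X, eval_pow]
  linear_combination (a1.re - a1.im * u) * i1 +
    (a3.re * (1 - 3 * u ^ 2) - a3.im * (3 * u - u ^ 3)) * i3 +
    (a5.re * (1 - 10 * u ^ 2 + 5 * u ^ 4) - a5.im * (5 * u - 10 * u ^ 3 + u ^ 5)) * i5

lemma TT_chart (c : ℝ) (e1 e3 e5 w : ℂ) (u : ℝ) :
    TT c e1 e3 e5 (w * ((1 + u * Complex.I) * ((√(1 + u ^ 2))⁻¹ : ℝ))) * √(1 + u ^ 2) ^ 5 =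
      c * √(1 + u ^ 2) ^ 5 + (QP (e1 * w) (e3 * w ^ 3) (e5 * w ^ 5)).eval u := by
  rw [← re_aux _ _ _ u _ _ (inv_mul_cancel₀ (sqrt_pos' u).ne') (sqrt_sq' u), TT, add_mul]
  congr 4 <;> ring

lemma TT_neg (c : ℝ) (e1 e3 e5 z : ℂ) : TT c e1 e3 e5 (-z) = 2 * c - TT c e1 e3 e5 z := by
  unfold TT
  have : e1 * -z + e3 * (-z) ^ 3 + e5 * (-z) ^ 5 = -(e1 * z + e3 * z ^ 3 + e5 * z ^ 5) := by ring
  rw [this, Complex.neg_re]; ring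

/-- the chart centred at `w` -/
lemma chart_pt (w z : ℂ) (hw : ‖w‖ = 1) (hz : ‖z‖ = 1) (h : 0 < (z * starRingEnd ℂ w).re) :
    z = w * ((1 + (((z * starRingEnd ℂ w).im / (z * starRingEnd ℂ w).re : ℝ) : ℂ) * Complex.I) *
      ((√(1 + ((z * starRingEnd ℂ w).im / (z * starRingEnd ℂ w).re) ^ 2))⁻¹ : ℝ)) := by
  set ζ := z * starRingEnd ℂ w with hζ
  have hζ1 : ζ.re ^ 2 + ζ.im ^ 2 = 1 := by
    have : ‖ζ‖ = 1 := by simp [hζ, hw, hz]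
    have h2 := Complex.sq_norm ζ
    rw [this, Complex.normSq_apply] at h2
    linarith
  have e : 1 + (ζ.im / ζ.re) ^ 2 = (ζ.re⁻¹) ^ 2 := by field_simp; linarith
  have hzw : z = w * ζ := by
    have : w * starRingEnd ℂ w = 1 := by rw [Complex.mul_conj, Complex.normSq_eq_norm_sq, hw]; simp
    rw [hζ]; linear_combination (-z) * this
  rw [e, Real.sqrt_sq (by positivity), inv_inv]
  nth_rewrite 1 [hzw]
  congr 1
  have : ζ.re ≠ 0 := h.ne'
  apply Complex.ext
  · simp
  · simp; field_simp

lemma chart (c : ℝ) (hc : c ≠ 0) (e1 e3 e5 w : ℂ) (hw : ‖w‖ = 1) (z : Fin 6 → ℂ)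
    (hinj : Function.Injective z) (hmod : ∀ i, ‖z i‖ = 1) (hT : ∀ i, TT c e1 e3 e5 (z i) = 0)
    (hre : ∀ i, 0 < (z i * starRingEnd ℂ w).re) :
    ∃ (q : ℝ[X]) (s : Finset ℝ), q.natDegree ≤ 5 ∧ s.card = 6 ∧
      (∀ x ∈ s, q.eval x = √(1 + x ^ 2) ^ 5) ∧
      (∀ x, x ∈ s ↔ ∃ i, (z i * starRingEnd ℂ w).im / (z i * starRingEnd ℂ w).re = x) ∧
      C (-c) * q = QP (e1 * w) (e3 * w ^ 3) (e5 * w ^ 5) ∧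
      c * (1 - q.eval 0) = TT c e1 e3 e5 w ∧
      c * (1 - q.coeff 5) = TT c e1 e3 e5 (Complex.I * w) := by
  set u : Fin 6 → ℝ := fun i => (z i * starRingEnd ℂ w).im / (z i * starRingEnd ℂ w).re with hu
  set Q := QP (e1 * w) (e3 * w ^ 3) (e5 * w ^ 5) with hQ
  have hz : ∀ i, z i = w * ((1 + (u i) * Complex.I) * ((√(1 + (u i) ^ 2))⁻¹ : ℝ)) :=
    fun i => chart_pt w (z i) hw (hmod i) (hre i)
  have hui : Function.Injective u := fun i j hij => hinj (by rw [hz i, hz j, hij])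
  have hCQ : C (-c) * (C (-c)⁻¹ * Q) = Q := by
    rw [← mul_assoc, ← C_mul, mul_inv_cancel₀ (neg_ne_zero.2 hc), C_1, one_mul]
  have h0 : Q.eval 0 = (e1 * w).re + (e3 * w ^ 3).re + (e5 * w ^ 5).re := by simp [hQ, QP]
  refine ⟨C (-c)⁻¹ * Q, Finset.univ.image u, (natDegree_C_mul_le _ _).trans (QP_deg _ _ _), ?_, ?_,
    by simp [hu], hCQ, ?_, ?_⟩
  · rw [Finset.card_image_of_injective _ hui]; simp
  · intro x hx
    obtain ⟨i, -, rfl⟩ := Finset.mem_image.1 hx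
    have := TT_chart c e1 e3 e5 w (u i)
    rw [← hz i, hT i] at this
    simp only [eval_mul, eval_C]
    field_simp
    linarith
  · simp only [eval_mul, eval_C, h0, TT, Complex.add_re]
    field_simp
    ring
  · simp only [coeff_C_mul, hQ, QP_coeff, TT, Complex.add_re]
    have j1 : e1 * (Complex.I * w) = Complex.I * (e1 * w) := by ring
    have j3 : e3 * (Complex.I * w) ^ 3 = -(Complex.I * (e3 * w ^ 3)) := by
      rw [mul_pow, Complex.I_pow_three]; ring
    have j5 : e5 * (Complex.I * w) ^ 5 = Complex.I * (e5 * w ^ 5) := by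
      rw [mul_pow, show Complex.I ^ 5 = Complex.I ^ 4 * Complex.I by ring, Complex.I_pow_four]; ring
    rw [j1, j3, j5, Complex.neg_re, Complex.I_mul_re, Complex.I_mul_re, Complex.I_mul_re]
    field_simp
    ring

lemma raked_TT (D : ℂ[X]) (hD : RakedSelfInversive 3 D) :
    ∃ (c : ℝ) (e1 e3 e5 : ℂ), ∀ z : ℂ, ‖z‖ = 1 → D.eval z = z ^ 5 * (TT c e1 e3 e5 z : ℂ) := by
  obtain ⟨hdeg, -, hodd, hself⟩ := hD
  norm_num at hdeg hodd hself
  refine ⟨(D.coeff 5).re, starRingEnd ℂ (D.coeff 4) + D.coeff 6,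
    starRingEnd ℂ (D.coeff 2) + D.coeff 8, starRingEnd ℂ (D.coeff 0) + D.coeff 10, ?_⟩
  intro z hz
  have hz1 : z * starRingEnd ℂ z = 1 := by
    rw [Complex.mul_conj, Complex.normSq_eq_norm_sq, hz]; simp
  have hz0 : z ≠ 0 := by rintro rfl; simp at hz
  have hinv : (starRingEnd ℂ z)⁻¹ = z := by
    exact inv_eq_of_mul_eq_one_left hz1
  have hs := hself z hz0
  rw [hinv] at hs
  have hev : D.eval z = D.coeff 0 + D.coeff 2 * z ^ 2 + D.coeff 4 * z ^ 4 + D.coeff 5 * z ^ 5 +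
      D.coeff 6 * z ^ 6 + D.coeff 8 * z ^ 8 + D.coeff 10 * z ^ 10 := by
    rw [eval_eq_sum_range, hdeg]
    simp [Finset.sum_range_succ, hodd 1 (by decide) (by decide), hodd 3 (by decide) (by decide),
      hodd 7 (by decide) (by decide), hodd 9 (by decide) (by decide)]
  set y := starRingEnd ℂ z with hy
  set A := D.eval z * y ^ 5 with hA
  have hDA : D.eval z = z ^ 5 * A := by
    have : (z * y) ^ 5 = 1 := by rw [hz1, one_pow]
    rw [hA]; linear_combination (-D.eval z) * this
  have hAc : starRingEnd ℂ A = A := by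
    have h5 : (z * y) ^ 5 = 1 := by rw [hz1, one_pow]
    have : starRingEnd ℂ A = starRingEnd ℂ (D.eval z) * z ^ 5 := by
      rw [hA, map_mul, map_pow, hy, Complex.conj_conj]
    rw [this, hA]
    nth_rewrite 2 [hs]
    linear_combination (-(starRingEnd ℂ (D.eval z)) * z ^ 5) * h5
  have hAre : (A.re : ℂ) = A := Complex.conj_eq_iff_re.1 hAc
  rw [hDA, ← hAre]
  congr 2
  have hA2 : A = D.coeff 5 + (D.coeff 0 * y ^ 5 + D.coeff 2 * y ^ 3 + D.coeff 4 * y +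
      D.coeff 6 * z + D.coeff 8 * z ^ 3 + D.coeff 10 * z ^ 5) := by
    rw [hA, hev]
    have p2 : z ^ 2 * y ^ 2 = 1 := by rw [← mul_pow, hz1, one_pow]
    have p4 : z ^ 4 * y ^ 4 = 1 := by rw [← mul_pow, hz1, one_pow]
    have p5 : z ^ 5 * y ^ 5 = 1 := by rw [← mul_pow, hz1, one_pow]
    linear_combination (D.coeff 2 * y ^ 3) * p2 + (D.coeff 4 * y) * p4 +
      (D.coeff 5 + D.coeff 6 * z + D.coeff 8 * z ^ 3 + D.coeff 10 * z ^ 5) * p5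
  have hc (d : ℂ) (n : ℕ) : (d * y ^ n).re = (starRingEnd ℂ d * z ^ n).re := by
    rw [← Complex.conj_re, map_mul, map_pow, hy, Complex.conj_conj]
  have hc1 := hc (D.coeff 4) 1
  rw [pow_one, pow_one] at hc1
  rw [hA2, TT]
  simp only [Complex.add_re, hc, hc1, add_mul]
  ring

lemma exp_re_im (a b : ℝ) :
    (Complex.exp (Complex.I * a) * starRingEnd ℂ (Complex.exp (Complex.I * b))).re = Real.cos (a - b) ∧
    (Complex.exp (Complex.I * a) * starRingEnd ℂ (Complex.exp (Complex.I * b))).im = Real.sin (a - b) := by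
  have : Complex.exp (Complex.I * a) * starRingEnd ℂ (Complex.exp (Complex.I * b)) =
      Complex.exp (((a - b : ℝ) : ℂ) * Complex.I) := by
    rw [← Complex.exp_conj, ← Complex.exp_add]
    congr 1
    simp
    ring
  rw [this, Complex.exp_ofReal_mul_I_re, Complex.exp_ofReal_mul_I_im]
  exact ⟨rfl, rfl⟩

lemma norm_exp_I (a : ℝ) : ‖Complex.exp (Complex.I * a)‖ = 1 := by
  rw [mul_comm]; exact Complex.norm_exp_ofReal_mul_I a

lemma arc_lt : Real.arccos (1 / 8) < Real.pi / 2 := Real.arccos_lt_pi_div_two.2 (by norm_num)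

lemma cos_arc {x : ℝ} (h : |x| ≤ Real.arccos (1 / 8)) : 1 / 8 ≤ Real.cos x := by
  rw [← Real.cos_abs, ← Real.cos_arccos (by norm_num : (-1 : ℝ) ≤ 1 / 8) (by norm_num)]
  exact Real.cos_le_cos_of_nonneg_of_le_pi (abs_nonneg _) (Real.arccos_le_pi _) h

lemma tan_ineq {p q : ℝ} (hp : 0 < Real.cos p) (hq : 0 < Real.cos q)
    (h : 1 / 8 ≤ Real.cos (p - q)) :
    √(1 + (Real.sin p / Real.cos p) ^ 2) * √(1 + (Real.sin q / Real.cos q) ^ 2) ≤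
      8 * (1 + Real.sin p / Real.cos p * (Real.sin q / Real.cos q)) := by
  have e (x : ℝ) (hx : 0 < Real.cos x) : √(1 + (Real.sin x / Real.cos x) ^ 2) = (Real.cos x)⁻¹ := by
    rw [← Real.sqrt_sq (inv_pos.2 hx).le]
    congr 1
    have := Real.sin_sq_add_cos_sq x
    field_simp
    linarith
  rw [e p hp, e q hq]
  rw [Real.cos_sub] at h
  field_simp
  linarith

lemma center_case (c : ℝ) (hc : c ≠ 0) (e1 e3 e5 : ℂ) (z : Fin 6 → ℂ)
    (hinj : Function.Injective z) (hmod : ∀ i, ‖z i‖ = 1) (hT : ∀ i, TT c e1 e3 e5 (z i) = 0)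
    (γ : ℝ) (t : Fin 6 → ℝ) (ht : ∀ i, t i ∈ Set.Icc γ (γ + Real.arccos (1 / 8)))
    (hz : ∀ i, z i = Complex.exp (Complex.I * (t i : ℂ))) (y : ℝ)
    (hy : TT c e1 e3 e5 (Complex.exp (Complex.I * y)) = 0 ∨
      TT c e1 e3 e5 (Complex.exp (Complex.I * y)) = 2 * c)
    (hne : ∀ i, t i ≠ y) (hlt : ∃ i, t i < y) (hgt : ∃ i, y < t i) : False := by
  have hpi := arc_lt
  obtain ⟨i0, hi0⟩ := hlt
  obtain ⟨j0, hj0⟩ := hgt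
  have hab : ∀ i, |t i - y| < Real.pi / 2 := fun i => by
    have h1 := ht i
    have h2 := ht i0
    have h3 := ht j0
    simp only [Set.mem_Icc] at h1 h2 h3
    rw [abs_lt]; constructor <;> linarith
  have hcos : ∀ i, 0 < Real.cos (t i - y) := fun i =>
    Real.cos_pos_of_mem_Ioo ⟨(abs_lt.1 (hab i)).1, (abs_lt.1 (hab i)).2⟩
  obtain ⟨q, s, hq, hs, hev, hmem, -, h0, -⟩ := chart c hc e1 e3 e5 _ (norm_exp_I y) z hinj hmod hT
    (fun i => by rw [hz i, (exp_re_im _ _).1]; exact hcos i)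
  have hmem' : ∀ x, x ∈ s ↔ ∃ i, Real.sin (t i - y) / Real.cos (t i - y) = x := by
    intro x
    rw [hmem]
    simp only [hz, (exp_re_im _ _).1, (exp_re_im _ _).2]
  have h0s : (0 : ℝ) ∉ s := by
    rw [hmem']
    rintro ⟨i, hi⟩
    rw [div_eq_zero_iff, or_iff_left (hcos i).ne'] at hi
    have hl := abs_lt.1 (hab i)
    have := (Real.sin_eq_zero_iff_of_lt_of_lt (by linarith) (by linarith)).1 hi
    exact hne i (by linarith)
  obtain ⟨κ, hκ0, hκ, hE⟩ := interp_err q hq s hs hev h0s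
  have hprod := prod_bound s hs h0s
    ⟨_, (hmem' _).2 ⟨i0, rfl⟩, div_neg_of_neg_of_pos
      (Real.sin_neg_of_neg_of_neg_pi_lt (by linarith) (by have := (abs_lt.1 (hab i0)).1; linarith [Real.pi_pos])) (hcos i0)⟩
    ⟨_, (hmem' _).2 ⟨j0, rfl⟩, div_pos
      (Real.sin_pos_of_pos_of_lt_pi (by linarith) (by have := (abs_lt.1 (hab j0)).2; linarith [Real.pi_pos])) (hcos j0)⟩
    (by
      intro a ha b hb
      obtain ⟨i, rfl⟩ := (hmem' a).1 ha
      obtain ⟨j, rfl⟩ := (hmem' b).1 hb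
      apply tan_ineq (hcos i) (hcos j)
      apply cos_arc
      have h1 := ht i
      have h2 := ht j
      simp only [Set.mem_Icc] at h1 h2
      rw [abs_le]; constructor <;> linarith)
  have hpne : ∏ x ∈ s, x ≠ 0 := Finset.prod_ne_zero_iff.2 fun x hx hx0 => h0s (hx0 ▸ hx)
  rw [hE] at h0
  rcases hy with hy | hy
  · rw [hy] at h0
    exact (mul_ne_zero hc (mul_ne_zero hκ0.ne' hpne)) h0
  · rw [hy, mul_comm 2 c] at h0
    have := mul_left_cancel₀ hc h0
    nlinarith

lemma inf_case (c : ℝ) (hc : c ≠ 0) (e1 e3 e5 : ℂ) (z : Fin 6 → ℂ)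
    (hinj : Function.Injective z) (hmod : ∀ i, ‖z i‖ = 1) (hT : ∀ i, TT c e1 e3 e5 (z i) = 0)
    (t : Fin 6 → ℝ) (hz : ∀ i, z i = Complex.exp (Complex.I * (t i : ℂ))) (y : ℝ)
    (hy : TT c e1 e3 e5 (Complex.I * Complex.exp (Complex.I * y)) = 0 ∨
      TT c e1 e3 e5 (Complex.I * Complex.exp (Complex.I * y)) = 2 * c)
    (hcos : ∀ i, 0 < Real.cos (t i - y)) : False := by
  obtain ⟨q, s, hq, hs, hev, -, -, -, h0⟩ := chart c hc e1 e3 e5 _ (norm_exp_I y) z hinj hmod hT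
    (fun i => by rw [hz i, (exp_re_im _ _).1]; exact hcos i)
  apply lead_bound q hq s hs hev
  rcases hy with hy | hy
  · rw [hy] at h0
    have := (mul_eq_zero.1 h0).resolve_left hc
    rw [show q.coeff 5 = 1 by linarith]; norm_num
  · rw [hy, mul_comm 2 c] at h0
    have := mul_left_cancel₀ hc h0
    rw [show q.coeff 5 = -1 by linarith]; norm_num

lemma no_root (c : ℝ) (hc : c ≠ 0) (e1 e3 e5 : ℂ) (z : Fin 6 → ℂ)
    (hinj : Function.Injective z) (hmod : ∀ i, ‖z i‖ = 1) (hT : ∀ i, TT c e1 e3 e5 (z i) = 0)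
    (γ : ℝ) (t : Fin 6 → ℝ) (ht : ∀ i, t i ∈ Set.Icc γ (γ + Real.arccos (1 / 8)))
    (hz : ∀ i, z i = Complex.exp (Complex.I * (t i : ℂ))) (w : ℂ) (hw : ‖w‖ = 1)
    (hwz : ∀ i, w ≠ z i) : TT c e1 e3 e5 w ≠ 0 := by
  intro h0
  have hwz' : ∀ i, -w ≠ z i := by
    intro i hi
    have := TT_neg c e1 e3 e5 w
    rw [hi, hT i, h0] at this
    exact hc (by linarith)
  have hpi := arc_lt
  have hex : ∃ y ∈ Set.Ico γ (γ + Real.pi), Complex.exp (Complex.I * y) = w ∨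
      Complex.exp (Complex.I * y) = -w := by
    refine ⟨toIcoMod Real.pi_pos γ w.arg, toIcoMod_mem_Ico _ _ _, ?_⟩
    rw [← self_sub_toIcoDiv_zsmul]
    have e1 : Complex.exp (Complex.I * ((w.arg - toIcoDiv Real.pi_pos γ w.arg • Real.pi : ℝ) : ℂ)) =
        w * (Complex.exp (Real.pi * Complex.I)) ^ (-(toIcoDiv Real.pi_pos γ w.arg)) := by
      have hw' : Complex.exp (w.arg * Complex.I) = w := by
        have := Complex.norm_mul_exp_arg_mul_I w
        rwa [hw, Complex.ofReal_one, one_mul] at this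
      nth_rewrite 3 [← hw']
      rw [← Complex.exp_int_mul, ← Complex.exp_add]
      congr 1
      push_cast [zsmul_eq_mul]
      ring
    rw [e1, Complex.exp_pi_mul_I]
    rcases Int.even_or_odd (-(toIcoDiv Real.pi_pos γ w.arg)) with h | h
    · left; rw [h.neg_one_zpow, mul_one]
    · right; rw [h.neg_one_zpow]; ring
  obtain ⟨y, hy, hyw⟩ := hex
  have hTn := TT_neg c e1 e3 e5 w
  rw [h0] at hTn
  have hTy : TT c e1 e3 e5 (Complex.exp (Complex.I * y)) = 0 ∨
      TT c e1 e3 e5 (Complex.exp (Complex.I * y)) = 2 * c := by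
    rcases hyw with h | h
    · left; rw [h, h0]
    · right; rw [h, hTn]; ring
  have hTy' : TT c e1 e3 e5 (-Complex.exp (Complex.I * y)) = 0 ∨
      TT c e1 e3 e5 (-Complex.exp (Complex.I * y)) = 2 * c := by
    rw [TT_neg]
    rcases hTy with h | h
    · right; rw [h]; ring
    · left; rw [h]; ring
  have hne : ∀ i, t i ≠ y := by
    intro i hi
    have := hz i
    rw [hi] at this
    rcases hyw with h | h
    · exact hwz i (by rw [this, h])
    · exact hwz' i (by rw [this, h])
  simp only [Set.mem_Ico] at hy
  have hI : Complex.exp (Complex.I * (Real.pi / 2)) = Complex.I := by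
    rw [mul_comm]; exact Complex.exp_pi_div_two_mul_I
  by_cases hl : ∃ i, t i < y
  · by_cases hg : ∃ i, y < t i
    · exact center_case c hc e1 e3 e5 z hinj hmod hT γ t ht hz y hTy hne hl hg
    · push Not at hg
      refine inf_case c hc e1 e3 e5 z hinj hmod hT t hz (y - Real.pi / 2) ?_ ?_
      · have : Complex.I * Complex.exp (Complex.I * ((y - Real.pi / 2 : ℝ) : ℂ)) =
            Complex.exp (Complex.I * y) := by
          nth_rewrite 1 [← hI]
          rw [← Complex.exp_add]
          congr 1
          push_cast
          ring
        rw [this]; exact hTy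
      · intro i
        have h1 := ht i
        have h2 := lt_of_le_of_ne (hg i) (hne i)
        simp only [Set.mem_Icc] at h1
        apply Real.cos_pos_of_mem_Ioo
        constructor <;> linarith
  · push Not at hl
    refine inf_case c hc e1 e3 e5 z hinj hmod hT t hz (y + Real.pi / 2) ?_ ?_
    · have : Complex.I * Complex.exp (Complex.I * ((y + Real.pi / 2 : ℝ) : ℂ)) =
          -Complex.exp (Complex.I * y) := by
        push_cast
        rw [mul_add, Complex.exp_add, hI]
        linear_combination Complex.exp (Complex.I * y) * Complex.I_mul_I
      rw [this]; exact hTy'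
    · intro i
      have h1 := ht i
      have h2 := lt_of_le_of_ne (hl i) (hne i).symm
      simp only [Set.mem_Icc] at h1
      apply Real.cos_pos_of_mem_Ioo
      constructor <;> linarith [Real.pi_pos]

lemma no_double (D : ℂ[X]) (c : ℝ) (hc : c ≠ 0) (e1 e3 e5 : ℂ)
    (hDT : ∀ z : ℂ, ‖z‖ = 1 → D.eval z = z ^ 5 * (TT c e1 e3 e5 z : ℂ)) (z : Fin 6 → ℂ)
    (hinj : Function.Injective z) (hmod : ∀ i, ‖z i‖ = 1) (hT : ∀ i, TT c e1 e3 e5 (z i) = 0)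
    (i0 : Fin 6) (hpos : ∀ i, 0 < (z i * starRingEnd ℂ (z i0)).re) :
    D.derivative.eval (z i0) ≠ 0 := by
  intro hder
  set w := z i0 with hw
  have hw1 : ‖w‖ = 1 := hmod i0
  have hw0 : w ≠ 0 := by intro h; rw [h] at hw1; simp at hw1
  have hwT : TT c e1 e3 e5 w = 0 := hT i0
  obtain ⟨q, s, hq, hs, hev, hmem, hQ, -, -⟩ := chart c hc e1 e3 e5 w hw1 z hinj hmod hT hpos
  have h0s : (0 : ℝ) ∈ s := by
    rw [hmem]; exact ⟨i0, by rw [← hw, Complex.mul_conj]; simp⟩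
  apply double_bound q hq s hs hev 0 h0s
  -- derivative computation
  have hs0 := hasDerivAt_s 0
  have hsi := (hs0.inv (sqrt_pos' 0).ne').ofReal_comp
  have hu : HasDerivAt (fun u : ℝ => (u : ℂ)) 1 0 := (hasDerivAt_id (0 : ℝ)).ofReal_comp
  have hzd := (((hu.mul_const Complex.I).const_add 1).mul hsi).const_mul w
  set Z : ℝ → ℂ := fun u => w * ((1 + u * Complex.I) * ((√(1 + u ^ 2))⁻¹ : ℝ)) with hZ
  obtain ⟨Z', hZ'⟩ : ∃ Z', HasDerivAt Z Z' 0 := ⟨_, hzd⟩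
  have hZ0 : Z 0 = w := by simp [hZ]
  have hZn : ∀ u, ‖Z u‖ = 1 := by
    intro u
    have hn : ‖(1 + u * Complex.I : ℂ)‖ = √(1 + u ^ 2) := by
      rw [Complex.norm_def, Complex.normSq_apply]; simp [sq]
    simp only [hZ, norm_mul, hw1, hn, one_mul, Complex.norm_real, norm_inv, Real.norm_eq_abs,
      abs_of_pos (sqrt_pos' u)]
    exact mul_inv_cancel₀ (sqrt_pos' u).ne'
  have hφ : HasDerivAt (fun u : ℝ => c * hh 0 u + (C (-c) * q).eval u)
      (c * hh 1 0 + (C (-c) * q).derivative.eval 0) 0 :=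
    ((hasDerivAt_hh 0 (by norm_num) 0).const_mul c).add ((C (-c) * q).hasDerivAt 0)
  have hLHS : HasDerivAt (fun u : ℝ => D.eval (Z u) * ((hh 0 u : ℝ) : ℂ)) 0 0 := by
    have h1 : HasDerivAt (fun u : ℝ => D.eval (Z u)) (D.derivative.eval (Z 0) * Z') 0 :=
      (D.hasDerivAt (Z 0)).comp (0 : ℝ) hZ'
    have h2 := h1.mul (hasDerivAt_hh 0 (by norm_num) 0).ofReal_comp
    refine h2.congr_deriv ?_
    rw [hZ0, hder, hDT w hw1, hwT]; simp
  have hRHS := (hZ'.pow 5).mul hφ.ofReal_comp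
  have heq : (fun u : ℝ => D.eval (Z u) * ((hh 0 u : ℝ) : ℂ)) =
      (Z ^ 5 * fun u : ℝ => ((c * hh 0 u + (C (-c) * q).eval u : ℝ) : ℂ)) := by
    funext u
    have := TT_chart c e1 e3 e5 w u
    rw [Pi.mul_apply, Pi.pow_apply, hDT _ (hZn u), hQ]
    change _ = _ * ((c * √(1 + u ^ 2) ^ 5 + _ : ℝ) : ℂ)
    rw [← this]
    change _ * ((√(1 + u ^ 2) ^ 5 : ℝ) : ℂ) = _
    push_cast
    simp only [hZ]
    push_cast
    ring
  rw [heq] at hLHS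
  have hu := hLHS.unique hRHS
  have hφ0 : c * hh 0 0 + (C (-c) * q).eval 0 = 0 := by
    rw [eval_mul, eval_C, hev 0 h0s]; simp only [hh]; ring
  rw [hφ0] at hu
  simp only [Pi.pow_apply, hZ0, Complex.ofReal_zero, mul_zero, zero_add] at hu
  have h5 := (mul_eq_zero.1 hu.symm).resolve_left (pow_ne_zero 5 hw0)
  have h6 : c * hh 1 0 + (C (-c) * q).derivative.eval 0 = 0 := by exact_mod_cast h5
  rw [derivative_C_mul, eval_mul, eval_C] at h6
  have h7 : c * (hh 1 0 - q.derivative.eval 0) = 0 := by linarith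
  exact (mul_eq_zero.1 h7).resolve_left hc

/-- Section 7.2: if `z₁, …, z₆` are distinct points of modulus `1` lying on an arc of
the unit circle of length at most `arccos(1/8)` and `D` is a raked self-inversive
polynomial of degree `10` (the case `k = 3`) vanishing at each `zⱼ`, then none of the
remaining four roots of `D` (with multiplicity) has absolute value `1`. -/
theorem stmt_19 (z : Fin 6 → ℂ) (hinj : Function.Injective z)
    (hmod : ∀ i, ‖z i‖ = 1)
    (harc : ∃ c : ℝ, ∀ i, ∃ θ ∈ Set.Icc c (c + Real.arccos (1 / 8)),
      z i = Complex.exp (Complex.I * (θ : ℂ)))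
    (D : Polynomial ℂ) (hD : RakedSelfInversive 3 D)
    (hroots : ∀ i, D.eval (z i) = 0) :
    ∀ w ∈ D.roots - (Finset.univ.val.map z), ‖w‖ ≠ 1 := by
  intro w hw hw1
  obtain ⟨γ, hγ⟩ := harc
  choose t ht hz using hγ
  obtain ⟨c, e1, e3, e5, hDT⟩ := raked_TT D hD
  have hD0 : D ≠ 0 := hD.2.1
  have hdeg : D.natDegree = 10 := hD.1
  have hTz : ∀ w, ‖w‖ = 1 → D.eval w = 0 → TT c e1 e3 e5 w = 0 := by
    intro w hw1 h
    have hw0 : w ≠ 0 := by intro h; rw [h] at hw1; simp at hw1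
    rw [hDT w hw1] at h
    exact_mod_cast (mul_eq_zero.1 h).resolve_left (pow_ne_zero 5 hw0)
  have hT := fun i => hTz (z i) (hmod i) (hroots i)
  have hpos : ∀ i j, 0 < (z i * starRingEnd ℂ (z j)).re := by
    intro i j
    rw [hz i, hz j, (exp_re_im _ _).1]
    have h1 := ht i
    have h2 := ht j
    simp only [Set.mem_Icc] at h1 h2
    have := cos_arc (x := t i - t j) (by rw [abs_le]; constructor <;> linarith)
    linarith
  have hc : c ≠ 0 := by
    intro hc
    have hsub : (Finset.univ.image z ∪ Finset.univ.image (fun i => -z i)) ⊆ D.roots.toFinset := by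
      intro x hx
      rw [Multiset.mem_toFinset, mem_roots hD0, IsRoot.def]
      rcases Finset.mem_union.1 hx with hx | hx
      · obtain ⟨i, -, rfl⟩ := Finset.mem_image.1 hx
        exact hroots i
      · obtain ⟨i, -, rfl⟩ := Finset.mem_image.1 hx
        rw [hDT _ (by rw [norm_neg]; exact hmod i), TT_neg, hT i, hc]
        simp
    have hdis : Disjoint (Finset.univ.image z) (Finset.univ.image (fun i => -z i)) := by
      rw [Finset.disjoint_left]
      intro x hx hx'
      obtain ⟨i, -, rfl⟩ := Finset.mem_image.1 hx
      obtain ⟨j, -, hj⟩ := Finset.mem_image.1 hx'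
      have h1 := hpos i j
      have h2 := hpos j j
      rw [← hj, neg_mul, Complex.neg_re] at h1
      linarith
    have h1 := Finset.card_le_card hsub
    rw [Finset.card_union_of_disjoint hdis, Finset.card_image_of_injective _ hinj,
      Finset.card_image_of_injective (f := fun i => -z i) _ (neg_injective.comp hinj)] at h1
    have h2 := Multiset.toFinset_card_le D.roots
    have h3 := D.card_roots'
    simp at h1
    omega
  have hcnt := Multiset.mem_sub.1 hw
  have hwr : D.eval w = 0 := by
    have : w ∈ D.roots := Multiset.count_pos.1 (by omega)
    exact (mem_roots hD0).1 this
  by_cases hex : ∃ i, w = z i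
  · obtain ⟨i, hi⟩ := hex
    have h1 : 0 < Multiset.count w (Finset.univ.val.map z) :=
      Multiset.count_pos.2 (Multiset.mem_map.2 ⟨i, by simp, hi.symm⟩)
    rw [count_roots] at hcnt
    have h2 : 1 < D.rootMultiplicity w := by omega
    have h3 := ((one_lt_rootMultiplicity_iff_isRoot hD0).1 h2).2
    rw [hi] at h3
    exact no_double D c hc e1 e3 e5 hDT z hinj hmod hT i (fun j => hpos j i) h3
  · push Not at hex
    exact no_root c hc e1 e3 e5 z hinj hmod hT γ t ht hz w hw1 hex (hTz w hw1 hwr)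
end
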